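/- arXiv:quant-ph/0412034 — 6 statements merged into one kernel-verified Lean document; each statement's English description precedes it below -/
import Mathlib

section
/- For every dimension d ≥ 2 and every real parameter t with -1/(d-1) ≤ t ≤ 0, the minimal output entropy of the transpose depolarizing channel is additive: h(Φ ⊗ Φ) = 2·h(Φ), where Φ ⊗ Φ is the linear map on d²×d² complex matrices determined by (Φ ⊗ Φ)(A ⊗ B) = Φ(A) ⊗ Φ(B) on Kronecker products. -/
/-!
Write `a = -t` and `b = (1 - t) / d`, so that `0 ≤ a ≤ b`. The output of `Φ` on a state with
eigenvalues `p i` has eigenvalues `b - a p i`, and concavity of `η = negMulLog` gives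
`h(Φ) = (d - 1) η(b) + η(b - a)`, attained at every pure state (`one_copy_isLeast`). Product inputs
give `h(Φ ⊗ Φ) ≤ 2 h(Φ)`; the work is in the reverse inequality.

The entropy is concave (`vnEntropy_concave`), so a pure input suffices, and since `Φ ⊗ Φ` is
covariant under local unitaries (`two_copy_conj`) that input may be taken in Schmidt form
`∑ s i • e_i ⊗ e_i` (`exists_schmidt`). Its output (`two_copy_schmidt`) is an orthogonal sum of

* a diagonal part with eigenvalues `b² - a b (s k² + s l²)`, `k ≠ l`. These are affine in the
  `s i²`, and concavity of `η` settles this part (`offDiag_entropy`);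
* a `d × d` block `M = diag(b² - 2 a b s i²) + a² s sᵀ`. For a product input its spectrum is `b²`,
  with multiplicity `d - 1`, and `(b - a)²`. The trace of `M` does not depend on `s`, the trace of
  `M²` is largest at product inputs, and all eigenvalues of `M` are at least `(b - a)²`
  (`schmidtBlock_eigenvalues_ge`). On `[(b - a)², ∞)` the function `η` lies above the concave
  quadratic that is tangent to it at `b²` and agrees with it at `(b - a)²`
  (`exists_quad_le_negMulLog`). Summing this quadratic over the spectrum of `M` gives the bound
  (`schmidtBlock_entropy`).

The two bounds add up to `2 h(Φ)`, since `η(x y) = y η(x) + x η(y)` and `d b - a = 1`.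
-/

open Matrix Kronecker ComplexOrder

/-- Von Neumann entropy of a (Hermitian) matrix: `-∑ pᵢ log pᵢ` over its eigenvalues,
with junk value `0` for non-Hermitian matrices. -/
noncomputable def vnEntropy {ι : Type*} [Fintype ι] [DecidableEq ι]
    (σ : Matrix ι ι ℂ) : ℝ :=
  if h : σ.IsHermitian then ∑ i, Real.negMulLog (h.eigenvalues i) else 0

/-- A density matrix: positive semidefinite with unit trace. -/
def IsDensityMatrix {ι : Type*} [Fintype ι] [DecidableEq ι]
    (ρ : Matrix ι ι ℂ) : Prop :=
  ρ.PosSemidef ∧ ρ.trace = 1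

/-- The minimal output entropy of a channel `Ψ`. -/
noncomputable def minOutputEntropy {ι : Type*} [Fintype ι] [DecidableEq ι]
    (Ψ : Matrix ι ι ℂ → Matrix ι ι ℂ) : ℝ :=
  sInf {x : ℝ | ∃ ρ : Matrix ι ι ℂ, IsDensityMatrix ρ ∧ x = vnEntropy (Ψ ρ)}

/-- The transpose depolarizing channel `Φ(μ) = t μᵀ + (1-t) (tr μ) I / d`. -/
noncomputable def transposeDepolarizing (d : ℕ) (t : ℝ)
    (μ : Matrix (Fin d) (Fin d) ℂ) : Matrix (Fin d) (Fin d) ℂ :=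
  (t : ℂ) • μ.transpose +
    (((1 - t : ℝ) : ℂ) * μ.trace / (d : ℂ)) • (1 : Matrix (Fin d) (Fin d) ℂ)

/-! ### A quadratic lower bound for `negMulLog` -/

/-- For `γ > 1/2` the quadratic `1 - z - γ (z - 1)²` stays below `negMulLog` to the right of the
inflection point `1 / (2γ)` of the difference, where the difference is convex and is stationary
at `1` with value `0`. -/
lemma quad_le_negMulLog_right {γ : ℝ} (hγ : 1 / 2 < γ) {z : ℝ} (hz : (2 * γ)⁻¹ ≤ z) :
    0 ≤ γ * (z - 1) ^ 2 - (1 - z) + Real.negMulLog z := by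
  have hk : 0 < (2 * γ)⁻¹ := by positivity
  have hk1 : (2 * γ)⁻¹ < 1 := inv_lt_one_of_one_lt₀ (by linarith)
  set f : ℝ → ℝ := fun z => γ * (z - 1) ^ 2 - (1 - z) + Real.negMulLog z with hf
  have hd : ∀ x : ℝ, x ≠ 0 → HasDerivAt f (2 * γ * (x - 1) - Real.log x) x := by
    intro x hx
    have h1 : HasDerivAt (fun z : ℝ => γ * (z - 1) ^ 2 - (1 - z)) (2 * γ * (x - 1) + 1) x := by
      have := (((hasDerivAt_id x).sub_const 1).pow 2).const_mul γ
      have h2 := this.sub ((hasDerivAt_id x).const_sub 1)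
      refine h2.congr_deriv ?_
      simp; ring
    exact (h1.add (Real.hasDerivAt_negMulLog hx)).congr_deriv (by ring)
  have hmono : MonotoneOn (fun x => 2 * γ * (x - 1) - Real.log x) (Set.Ici (2 * γ)⁻¹) := by
    apply monotoneOn_of_deriv_nonneg (convex_Ici _)
    · intro x hx
      have : x ≠ 0 := (hk.trans_le hx).ne'
      exact ContinuousAt.continuousWithinAt (by fun_prop (disch := assumption))
    · intro x hx
      rw [interior_Ici] at hx
      have : x ≠ 0 := (hk.trans hx).ne'
      exact DifferentiableAt.differentiableWithinAt (by fun_prop (disch := assumption))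
    · intro x hx
      rw [interior_Ici] at hx
      have hx0 : 0 < x := hk.trans hx
      have : HasDerivAt (fun x => 2 * γ * (x - 1) - Real.log x) (2 * γ * 1 - x⁻¹) x :=
        (((hasDerivAt_id x).sub_const 1).const_mul (2 * γ)).sub (Real.hasDerivAt_log hx0.ne')
      rw [this.deriv]
      have := inv_anti₀ hk (le_of_lt hx)
      rw [inv_inv] at this
      linarith
  have hf1 : f 1 = 0 := by simp [hf]
  have hcont : Continuous f := by simp only [hf]; fun_prop
  rcases le_total z 1 with h | h
  · have : AntitoneOn f (Set.Icc (2 * γ)⁻¹ 1) := by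
      apply antitoneOn_of_deriv_nonpos (convex_Icc _ _) hcont.continuousOn
      · intro x hx
        rw [interior_Icc] at hx
        exact (hd x (hk.trans hx.1).ne').differentiableAt.differentiableWithinAt
      · intro x hx
        rw [interior_Icc] at hx
        rw [(hd x (hk.trans hx.1).ne').deriv]
        have := hmono (Set.mem_Ici.2 hx.1.le) (Set.mem_Ici.2 hk1.le) hx.2.le
        simpa using this
    have := this ⟨hz, h⟩ ⟨hk1.le, le_rfl⟩ h
    rw [hf1] at this; exact this
  · have : MonotoneOn f (Set.Ici 1) := by
      apply monotoneOn_of_deriv_nonneg (convex_Ici _) hcont.continuousOn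
      · intro x hx
        rw [interior_Ici] at hx
        exact (hd x (zero_lt_one.trans hx).ne').differentiableAt.differentiableWithinAt
      · intro x hx
        rw [interior_Ici] at hx
        rw [(hd x (zero_lt_one.trans hx).ne').deriv]
        have := hmono (Set.mem_Ici.2 hk1.le) (Set.mem_Ici.2 (hk1.trans hx).le) (le_of_lt hx)
        simpa using this
    have := this (Set.mem_Ici.2 le_rfl) h h
    rw [hf1] at this; exact this

/-- The case `y = 1` of `exists_quad_le_negMulLog`, to which the general case reduces by scaling.
The curvature `γ` is fixed by equality at `z₀`; the difference of the two sides is concave up to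
`1 / (2γ)`, hence nonnegative there because it is so at both ends. -/
lemma exists_quad_le_negMulLog_one {z₀ : ℝ} (h0 : 0 ≤ z₀) (h1 : z₀ ≤ 1) :
    ∃ γ : ℝ, 0 ≤ γ ∧ Real.negMulLog z₀ = 1 - z₀ - γ * (z₀ - 1) ^ 2 ∧
      ∀ z, z₀ ≤ z → 1 - z - γ * (z - 1) ^ 2 ≤ Real.negMulLog z := by
  rcases eq_or_lt_of_le h1 with rfl | h1
  · refine ⟨1, zero_le_one, by simp, fun z hz => ?_⟩
    have := quad_le_negMulLog_right (γ := 1) (z := z) (by norm_num) (by linarith)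
    linarith
  have hpos : 0 < (z₀ - 1) ^ 2 := by have : z₀ - 1 ≠ 0 := by linarith
                                     positivity
  obtain ⟨γ, hγ⟩ : ∃ γ, γ * (z₀ - 1) ^ 2 = 1 - z₀ - Real.negMulLog z₀ :=
    ⟨_, div_mul_cancel₀ _ hpos.ne'⟩
  -- `γ > 1/2` amounts to `log z₀ > (z₀ - 1/z₀) / 2`, that is, `u < sinh u` for `u = -log z₀`.
  have hhalf : 1 / 2 < γ := by
    rcases eq_or_lt_of_le h0 with rfl | h0
    · simp at hγ; linarith
    have hs : -Real.log z₀ < Real.sinh (-Real.log z₀) :=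
      Real.self_lt_sinh_iff.2 (by linarith [Real.log_neg h0 h1])
    rw [Real.sinh_eq, neg_neg, Real.exp_log h0, Real.exp_neg, Real.exp_log h0] at hs
    have h2 : z₀ * -Real.log z₀ < z₀ * ((z₀⁻¹ - z₀) / 2) := mul_lt_mul_of_pos_left hs h0
    have h3 : z₀ * ((z₀⁻¹ - z₀) / 2) = (1 - z₀ ^ 2) / 2 := by field_simp
    have h4 : Real.negMulLog z₀ = z₀ * -Real.log z₀ := by rw [Real.negMulLog]; ring
    have h5 : 1 / 2 * (z₀ - 1) ^ 2 < γ * (z₀ - 1) ^ 2 := by rw [hγ]; nlinarith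
    exact lt_of_mul_lt_mul_right h5 hpos.le
  refine ⟨γ, by linarith, by linarith, fun z hz => ?_⟩
  rcases le_total (2 * γ)⁻¹ z with hk | hk
  · linarith [quad_le_negMulLog_right hhalf hk]
  have hc : ConcaveOn ℝ (Set.Icc 0 (2 * γ)⁻¹)
      (fun z => γ * (z - 1) ^ 2 - (1 - z) + Real.negMulLog z) := by
    have hd : ∀ x : ℝ, x ≠ 0 → HasDerivAt (fun z => γ * (z - 1) ^ 2 - (1 - z) + Real.negMulLog z)
        (2 * γ * (x - 1) - Real.log x) x := by
      intro x hx
      have h2 := ((((hasDerivAt_id x).sub_const 1).pow 2).const_mul γ).sub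
        ((hasDerivAt_id x).const_sub 1)
      refine (h2.add (Real.hasDerivAt_negMulLog hx)).congr_deriv ?_
      simp; ring
    apply AntitoneOn.concaveOn_of_deriv (convex_Icc _ _)
    · exact Continuous.continuousOn (by fun_prop)
    · intro x hx
      rw [interior_Icc] at hx
      exact (hd x hx.1.ne').differentiableAt.differentiableWithinAt
    · have : AntitoneOn (fun x => 2 * γ * (x - 1) - Real.log x) (Set.Ioo 0 (2 * γ)⁻¹) := by
        apply antitoneOn_of_deriv_nonpos (convex_Ioo _ _)
        · intro x hx
          have : x ≠ 0 := hx.1.ne'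
          exact ContinuousAt.continuousWithinAt (by fun_prop (disch := assumption))
        · intro x hx
          rw [interior_Ioo] at hx
          have : x ≠ 0 := hx.1.ne'
          exact DifferentiableAt.differentiableWithinAt (by fun_prop (disch := assumption))
        · intro x hx
          rw [interior_Ioo] at hx
          have : HasDerivAt (fun x => 2 * γ * (x - 1) - Real.log x) (2 * γ * 1 - x⁻¹) x :=
            (((hasDerivAt_id x).sub_const 1).const_mul (2 * γ)).sub (Real.hasDerivAt_log hx.1.ne')
          rw [this.deriv]
          have := inv_anti₀ hx.1 hx.2.le
          rw [inv_inv] at this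
          linarith
      rw [interior_Icc]
      exact this.congr fun x hx => (hd x hx.1.ne').deriv.symm
  have hmin := hc.min_le_of_mem_Icc (x := z₀) (y := (2 * γ)⁻¹) (z := z) ⟨h0, hz.trans hk⟩
    ⟨by positivity, le_rfl⟩ ⟨hz, hk⟩
  have ha := quad_le_negMulLog_right hhalf le_rfl
  have hb : 0 ≤ γ * (z₀ - 1) ^ 2 - (1 - z₀) + Real.negMulLog z₀ := by linarith
  have := (le_min hb ha).trans hmin
  linarith

/-- The quadratic that touches `negMulLog` at `y` and meets it again at `x₀ ≤ y` stays below it on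
`[x₀, ∞)`: the interpolation error has the sign of `(x - y)² (x - x₀)`, since the third derivative
of `negMulLog` is positive. -/
lemma exists_quad_le_negMulLog {x₀ y : ℝ} (h0 : 0 ≤ x₀) (h1 : x₀ ≤ y) (hy : 0 < y) :
    ∃ β γ : ℝ, 0 ≤ γ ∧
      Real.negMulLog x₀ = Real.negMulLog y + β * (x₀ - y) - γ * (x₀ - y) ^ 2 ∧
      ∀ x, x₀ ≤ x →
        Real.negMulLog y + β * (x - y) - γ * (x - y) ^ 2 ≤ Real.negMulLog x := by
  obtain ⟨γ, hγ, he, hl⟩ := exists_quad_le_negMulLog_one (z₀ := x₀ / y) (by positivity)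
    ((div_le_one hy).2 h1)
  have key : ∀ x, Real.negMulLog x = y * Real.negMulLog (x / y) + x / y * Real.negMulLog y := by
    intro x
    rw [← Real.negMulLog_mul, div_mul_cancel₀ _ hy.ne']
  have hq : ∀ x, Real.negMulLog y + (Real.negMulLog y / y - 1) * (x - y) - γ / y * (x - y) ^ 2 =
      y * (1 - x / y - γ * (x / y - 1) ^ 2) + x / y * Real.negMulLog y := by
    intro x; field_simp; ring
  refine ⟨Real.negMulLog y / y - 1, γ / y, by positivity, ?_, fun x hx => ?_⟩
  · rw [hq, key x₀, he]
  · rw [hq, key x]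
    have := mul_le_mul_of_nonneg_left (hl (x / y) (by gcongr)) hy.le
    linarith

/-! ### Entropy, characteristic polynomials and concavity -/

open Polynomial in
/-- The eigenvalues of a Hermitian matrix are, with multiplicity, the roots of any complete real
factorization of its characteristic polynomial. -/
lemma eigenvalues_multiset {n κ : Type*} [Fintype n] [DecidableEq n] [Fintype κ]
    {A : Matrix n n ℂ} (hA : A.IsHermitian) (D : κ → ℝ)
    (h : A.charpoly = ∏ k, (X - C ((D k : ℝ) : ℂ))) :
    (Finset.univ : Finset n).val.map hA.eigenvalues =
      (Finset.univ : Finset κ).val.map D := by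
  have h1 := hA.roots_charpoly_eq_eigenvalues
  have h2 : A.charpoly.roots = (Finset.univ : Finset κ).val.map (fun k => ((D k : ℝ) : ℂ)) := by
    rw [h, Polynomial.roots_prod]
    · simp
    · simp [Finset.prod_ne_zero_iff, Polynomial.X_sub_C_ne_zero]
  have h3 := congrArg (Multiset.map Complex.re) (h1.symm.trans h2)
  simpa [Multiset.map_map, Function.comp_def] using h3

open Polynomial in
lemma vnEntropy_eq_of_charpoly {n κ : Type*} [Fintype n] [DecidableEq n] [Fintype κ]
    {A : Matrix n n ℂ} (hA : A.IsHermitian) (D : κ → ℝ)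
    (h : A.charpoly = ∏ k, (X - C ((D k : ℝ) : ℂ))) :
    vnEntropy A = ∑ k, Real.negMulLog (D k) := by
  rw [vnEntropy, dif_pos hA]
  have := congrArg (fun m => (Multiset.map Real.negMulLog m).sum) (eigenvalues_multiset hA D h)
  simpa [Multiset.map_map, Function.comp_def] using this

open Polynomial in
lemma posSemidef_of_charpoly {n κ : Type*} [Fintype n] [DecidableEq n] [Fintype κ]
    {A : Matrix n n ℂ} (hA : A.IsHermitian) (D : κ → ℝ)
    (h : A.charpoly = ∏ k, (X - C ((D k : ℝ) : ℂ))) (hD : ∀ k, 0 ≤ D k) :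
    A.PosSemidef := by
  rw [hA.posSemidef_iff_eigenvalues_nonneg]
  intro i
  have : hA.eigenvalues i ∈ (Finset.univ : Finset n).val.map hA.eigenvalues :=
    Multiset.mem_map_of_mem _ (Finset.mem_univ_val i)
  rw [eigenvalues_multiset hA D h, Multiset.mem_map] at this
  obtain ⟨k, -, hk⟩ := this
  rw [← hk]; exact hD k

lemma charpoly_unitary_conj {n : Type*} [Fintype n] [DecidableEq n]
    {W : Matrix n n ℂ} (hW : Wᴴ * W = 1) (B : Matrix n n ℂ) :
    (W * B * Wᴴ).charpoly = B.charpoly := by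
  rw [charpoly_mul_comm, ← mul_assoc, hW, one_mul]

/-- Spectral decomposition in matrix form. -/
lemma exists_unitary_diag {n : Type*} [Fintype n] [DecidableEq n] {A : Matrix n n ℂ}
    (hA : A.IsHermitian) : ∃ V : Matrix n n ℂ, Vᴴ * V = 1 ∧ V * Vᴴ = 1 ∧
      A = V * diagonal (fun i => ((hA.eigenvalues i : ℝ) : ℂ)) * Vᴴ := by
  refine ⟨hA.eigenvectorUnitary, ?_, ?_, ?_⟩
  · exact Unitary.coe_star_mul_self hA.eigenvectorUnitary
  · exact Unitary.coe_mul_star_self hA.eigenvectorUnitary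
  · conv_lhs => rw [hA.spectral_theorem, Unitary.conjStarAlgAut_apply]
    rfl

lemma conj_diagonal_apply_self {n : Type*} [Fintype n] [DecidableEq n]
    (W : Matrix n n ℂ) (D : n → ℝ) (i : n) :
    (W * diagonal (fun i => ((D i : ℝ) : ℂ)) * Wᴴ) i i =
      ((∑ j, Complex.normSq (W i j) * D j : ℝ) : ℂ) := by
  rw [mul_apply]
  push_cast
  refine Finset.sum_congr rfl fun j _ => ?_
  rw [mul_diagonal, conjTranspose_apply, Complex.normSq_eq_conj_mul_self, Complex.star_def]
  ring

lemma unitary_row_sum {n : Type*} [Fintype n] [DecidableEq n]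
    {W : Matrix n n ℂ} (hW : W * Wᴴ = 1) (i : n) : ∑ j, Complex.normSq (W i j) = 1 := by
  have := conj_diagonal_apply_self W (fun _ => 1) i
  simp only [Complex.ofReal_one, mul_one] at this
  rw [diagonal_one, mul_one, hW, one_apply_eq] at this
  exact_mod_cast this.symm

lemma unitary_col_sum {n : Type*} [Fintype n] [DecidableEq n]
    {W : Matrix n n ℂ} (hW : Wᴴ * W = 1) (j : n) : ∑ i, Complex.normSq (W i j) = 1 := by
  have := unitary_row_sum (W := Wᴴ) (by simpa using hW) j
  simpa [conjTranspose_apply] using this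

/-- Peierls' inequality: measuring in another orthonormal basis increases the entropy, because the
diagonal entries are doubly stochastic averages of the eigenvalues. -/
lemma vnEntropy_le_diag {n : Type*} [Fintype n] [DecidableEq n] {A U : Matrix n n ℂ}
    (hA : A.PosSemidef) (hU : Uᴴ * U = 1) (hU' : U * Uᴴ = 1) :
    vnEntropy A ≤ ∑ i, Real.negMulLog ((Uᴴ * A * U) i i).re := by
  obtain ⟨V, hV, hV', hAV⟩ := exists_unitary_diag hA.1
  set e := hA.1.eigenvalues with he
  have he0 : ∀ i, 0 ≤ e i := hA.eigenvalues_nonneg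
  have hW : (Uᴴ * V) * (Uᴴ * V)ᴴ = 1 := by
    rw [conjTranspose_mul, conjTranspose_conjTranspose, mul_assoc, ← mul_assoc V, hV', one_mul, hU]
  have hW' : (Uᴴ * V)ᴴ * (Uᴴ * V) = 1 := by
    rw [conjTranspose_mul, conjTranspose_conjTranspose, mul_assoc, ← mul_assoc U, hU', one_mul, hV]
  have hdiag : ∀ i, ((Uᴴ * A * U) i i).re = ∑ j, Complex.normSq ((Uᴴ * V) i j) * e j := by
    intro i
    have : Uᴴ * A * U = (Uᴴ * V) * diagonal (fun i => ((e i : ℝ) : ℂ)) * (Uᴴ * V)ᴴ := by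
      rw [conjTranspose_mul, conjTranspose_conjTranspose]
      conv_lhs => rw [hAV]
      simp only [mul_assoc]
    rw [this, conj_diagonal_apply_self, Complex.ofReal_re]
  calc vnEntropy A = ∑ j, Real.negMulLog (e j) := by rw [vnEntropy, dif_pos hA.1]
    _ = ∑ i, ∑ j, Complex.normSq ((Uᴴ * V) i j) * Real.negMulLog (e j) := by
        rw [Finset.sum_comm]
        refine Finset.sum_congr rfl fun j _ => ?_
        rw [← Finset.sum_mul, unitary_col_sum hW', one_mul]
    _ ≤ _ := by
        refine Finset.sum_le_sum fun i _ => ?_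
        rw [hdiag]
        exact Real.concaveOn_negMulLog.le_map_sum (fun j _ => Complex.normSq_nonneg _)
          (unitary_row_sum hW i) (fun j _ => he0 j)

/-- Concavity of the von Neumann entropy: measure in an eigenbasis of the mixture, apply Peierls'
inequality to each `σ k` and concavity of `negMulLog` to each diagonal entry. -/
lemma vnEntropy_concave {n κ : Type*} [Fintype n] [DecidableEq n] [Fintype κ]
    (p : κ → ℝ) (σ : κ → Matrix n n ℂ) (hp : ∀ k, 0 ≤ p k) (hp1 : ∑ k, p k = 1)
    (hσ : ∀ k, (σ k).PosSemidef) :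
    ∑ k, p k * vnEntropy (σ k) ≤ vnEntropy (∑ k, (p k : ℂ) • σ k) := by
  have hS : (∑ k, (p k : ℂ) • σ k).PosSemidef :=
    posSemidef_sum _ fun k _ => (hσ k).smul (by exact_mod_cast hp k)
  obtain ⟨U, hU, hU', hSU⟩ := exists_unitary_diag hS.1
  have hd : ∀ i, hS.1.eigenvalues i = ∑ k, p k * ((Uᴴ * σ k * U) i i).re := by
    intro i
    have h1 : Uᴴ * (∑ k, (p k : ℂ) • σ k) * U =
        diagonal (fun i => ((hS.1.eigenvalues i : ℝ) : ℂ)) := by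
      conv_lhs => rw [hSU]
      rw [← mul_assoc, ← mul_assoc, hU, one_mul, mul_assoc, hU, mul_one]
    have h2 := congrArg Complex.re (congrFun (congrFun h1 i) i)
    rw [diagonal_apply_eq, Complex.ofReal_re] at h2
    rw [← h2]
    simp [Finset.mul_sum, Finset.sum_mul, Matrix.sum_apply]
  have hnn : ∀ k i, 0 ≤ ((Uᴴ * σ k * U) i i).re := fun k i =>
    (Complex.le_def.1 ((hσ k).conjTranspose_mul_mul_same U).diag_nonneg).1
  calc ∑ k, p k * vnEntropy (σ k)
      ≤ ∑ k, p k * ∑ i, Real.negMulLog ((Uᴴ * σ k * U) i i).re :=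
        Finset.sum_le_sum fun k _ =>
          mul_le_mul_of_nonneg_left (vnEntropy_le_diag (hσ k) hU hU') (hp k)
    _ = ∑ i, ∑ k, p k * Real.negMulLog ((Uᴴ * σ k * U) i i).re := by
        simp_rw [Finset.mul_sum]; exact Finset.sum_comm
    _ ≤ ∑ i, Real.negMulLog (hS.1.eigenvalues i) := by
        refine Finset.sum_le_sum fun i _ => ?_
        rw [hd]
        exact Real.concaveOn_negMulLog.le_map_sum (fun k _ => hp k) hp1 (fun k _ => hnn k i)
    _ = _ := by rw [vnEntropy, dif_pos hS.1]

/-! ### Singular value decomposition -/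

/-- Singular value decomposition of a square matrix. The left singular vectors are the normalized
images of the right ones where the singular value is nonzero, completed to an orthonormal basis. -/
lemma exists_svd {n : Type*} [Fintype n] [DecidableEq n] (A : Matrix n n ℂ) :
    ∃ (U V : Matrix n n ℂ) (s : n → ℝ), Uᴴ * U = 1 ∧ V * Vᴴ = 1 ∧ Vᴴ * V = 1 ∧
      A = U * diagonal (fun i => ((s i : ℝ) : ℂ)) * Vᴴ := by
  have hP : (Aᴴ * A).PosSemidef := posSemidef_conjTranspose_mul_self A
  obtain ⟨V, hV, hV', hAV⟩ := exists_unitary_diag hP.1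
  set e := hP.1.eigenvalues with he
  have he0 : ∀ i, 0 ≤ e i := hP.eigenvalues_nonneg
  set B := A * V with hB
  have hBB : Bᴴ * B = diagonal (fun i => ((e i : ℝ) : ℂ)) := by
    rw [hB, conjTranspose_mul, mul_assoc, ← mul_assoc Aᴴ, hAV, mul_assoc, mul_assoc, hV, mul_one,
      ← mul_assoc, hV, one_mul]
  have hBin : ∀ i j, ∑ k, B k j * star (B k i) = if i = j then ((e i : ℝ) : ℂ) else 0 := by
    intro i j
    have := congrFun (congrFun hBB i) j
    rw [mul_apply, diagonal_apply] at this
    rw [← this]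
    exact Finset.sum_congr rfl fun k _ => by rw [conjTranspose_apply, mul_comm]
  let v : n → EuclideanSpace ℂ n := fun i =>
    ((Real.sqrt (e i))⁻¹ : ℂ) • WithLp.toLp 2 (fun k => B k i)
  have hin : ∀ i j, inner ℂ (v i) (v j) =
      ((Real.sqrt (e i))⁻¹ : ℂ) * ((Real.sqrt (e j))⁻¹ : ℂ) *
        (if i = j then ((e i : ℝ) : ℂ) else 0) := by
    intro i j
    rw [← hBin i j]
    simp only [v, inner_smul_left, inner_smul_right, EuclideanSpace.inner_eq_star_dotProduct]
    simp [dotProduct, mul_assoc]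
    ring
  have hon : Orthonormal ℂ (Set.domRestrict {i | e i ≠ 0} v) := by
    rw [orthonormal_iff_ite]
    rintro ⟨i, hi⟩ ⟨j, hj⟩
    simp only [Set.domRestrict_apply, hin, Subtype.mk.injEq]
    split_ifs with h
    · subst h
      have : 0 < e i := lt_of_le_of_ne (he0 i) (Ne.symm hi)
      have h2 : ((Real.sqrt (e i) : ℝ) : ℂ) ≠ 0 := by
        exact_mod_cast (Real.sqrt_pos.2 this).ne'
      have h3 : ((e i : ℝ) : ℂ) = (Real.sqrt (e i) : ℂ) * (Real.sqrt (e i) : ℂ) := by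
        exact_mod_cast (Real.mul_self_sqrt (he0 i)).symm
      conv_lhs => rw [h3]
      field_simp
    · simp
  obtain ⟨b, hb⟩ := hon.exists_orthonormalBasis_extension_of_card_eq (by simp)
  refine ⟨of fun k i => b i k, V, fun i => Real.sqrt (e i), ?_, hV', hV, ?_⟩
  · ext i j
    have := orthonormal_iff_ite.1 b.orthonormal i j
    rw [EuclideanSpace.inner_eq_star_dotProduct] at this
    rw [mul_apply, one_apply, ← this]
    simp [dotProduct, mul_comm]
  · have hcol : A * V = (of fun k i => b i k) * diagonal (fun i => ((Real.sqrt (e i) : ℝ) : ℂ)) := by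
      ext k i
      rw [mul_diagonal, ← hB, of_apply]
      by_cases hi : e i = 0
      · rw [hi, Real.sqrt_zero, Complex.ofReal_zero, mul_zero]
        -- a column of squared norm `e i = 0` vanishes
        have h1 := hBin i i
        rw [if_pos rfl, hi] at h1
        have h2 : ∑ k, Complex.normSq (B k i) = 0 := by
          have : ((∑ k, Complex.normSq (B k i) : ℝ) : ℂ) = ((0 : ℝ) : ℂ) := by
            rw [← h1]; push_cast
            exact Finset.sum_congr rfl fun k _ => by rw [Complex.star_def, Complex.mul_conj]
          exact_mod_cast this
        rw [Finset.sum_eq_zero_iff_of_nonneg fun _ _ => Complex.normSq_nonneg _] at h2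
        exact Complex.normSq_eq_zero.1 (h2 k (Finset.mem_univ k))
      · rw [hb i hi]
        have : 0 < e i := lt_of_le_of_ne (he0 i) (Ne.symm hi)
        have h2 : ((Real.sqrt (e i) : ℝ) : ℂ) ≠ 0 := by
          exact_mod_cast (Real.sqrt_pos.2 this).ne'
        simp only [v, PiLp.smul_apply, smul_eq_mul]
        field_simp
    rw [← hcol, mul_assoc, hV', mul_one]

/-! ### The block on the span of the vectors `e_i ⊗ e_i` -/

/-- For a unit vector `s`, the form `1 - 2 diag(s²) + s sᵀ` is positive semidefinite. -/
lemma quad_form_nonneg {n : Type*} [Fintype n] (s x : n → ℝ) (hs : ∑ i, s i ^ 2 = 1) :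
    0 ≤ ∑ i, (1 - 2 * s i ^ 2) * x i ^ 2 + (∑ i, s i * x i) ^ 2 := by
  -- twice the form is the off-diagonal part of `∑ i j, (s j * x i + s i * x j)²`
  have h1 : ∑ i, ∑ j, (s j * x i + s i * x j) ^ 2 =
      2 * ∑ i, x i ^ 2 + 2 * (∑ i, s i * x i) ^ 2 := by
    have h2 : ∀ i, ∑ j, (s j * x i + s i * x j) ^ 2 =
        x i ^ 2 + s i ^ 2 * ∑ j, x j ^ 2 + 2 * (s i * x i) * ∑ j, s j * x j := by
      intro i
      have : x i ^ 2 = x i ^ 2 * ∑ j, s j ^ 2 := by rw [hs, mul_one]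
      rw [this]
      simp only [Finset.mul_sum, ← Finset.sum_add_distrib]
      exact Finset.sum_congr rfl fun j _ => by ring
    simp only [h2, Finset.sum_add_distrib, ← Finset.sum_mul, ← Finset.mul_sum, hs]
    ring
  have h3 : ∑ i, 4 * (s i ^ 2 * x i ^ 2) ≤ ∑ i, ∑ j, (s j * x i + s i * x j) ^ 2 := by
    refine Finset.sum_le_sum fun i _ => ?_
    have := Finset.single_le_sum (f := fun j => (s j * x i + s i * x j) ^ 2)
      (fun j _ => sq_nonneg _) (Finset.mem_univ i)
    refine le_trans (le_of_eq ?_) this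
    ring
  have h4 : ∑ i, (1 - 2 * s i ^ 2) * x i ^ 2 =
      ∑ i, x i ^ 2 - (∑ i, 4 * (s i ^ 2 * x i ^ 2)) / 2 := by
    rw [Finset.sum_div, ← Finset.sum_sub_distrib]
    exact Finset.sum_congr rfl fun j _ => by ring
  rw [h4]; linarith

/-- The restriction of the two-copy output to the span of the vectors `e_i ⊗ e_i`, for the input
with Schmidt coefficients `s`; here `a = -t` and `b = (1 - t) / d`. -/
def schmidtBlock {n : Type*} [DecidableEq n] (a b : ℝ) (s : n → ℝ) : Matrix n n ℂ :=
  of fun i j => (((if i = j then b ^ 2 - 2 * a * b * s i ^ 2 else 0) + a ^ 2 * (s i * s j) : ℝ) : ℂ)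

lemma schmidtBlock_symm {n : Type*} [DecidableEq n] (a b : ℝ) (s : n → ℝ) (i j : n) :
    schmidtBlock a b s j i = schmidtBlock a b s i j := by
  simp only [schmidtBlock, of_apply]
  congr 2
  · by_cases h : i = j
    · subst h; rfl
    · rw [if_neg h, if_neg (Ne.symm h)]
  · ring

lemma schmidtBlock_isHermitian {n : Type*} [DecidableEq n] (a b : ℝ) (s : n → ℝ) :
    (schmidtBlock a b s).IsHermitian := by
  ext i j
  rw [conjTranspose_apply, schmidtBlock_symm]
  simp only [schmidtBlock, of_apply, Complex.star_def, Complex.conj_ofReal]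

/-- The smallest eigenvalue of the block is at least the smallest output eigenvalue `(b - a)²` of a
product input. -/
lemma schmidtBlock_eigenvalues_ge {n : Type*} [Fintype n] [DecidableEq n] {a b : ℝ} (ha : 0 ≤ a)
    (hab : a ≤ b) (s : n → ℝ) (hs : ∑ i, s i ^ 2 = 1) (k : n) :
    (b - a) ^ 2 ≤ (schmidtBlock_isHermitian a b s).eigenvalues k := by
  set hM := schmidtBlock_isHermitian a b s
  set v : n → ℂ := ⇑(hM.eigenvectorBasis k) with hv
  have hnorm : ∑ i, Complex.normSq (v i) = 1 := by
    have h1 := hM.eigenvectorBasis.orthonormal.1 k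
    have h2 := EuclideanSpace.norm_sq_eq (hM.eigenvectorBasis k)
    rw [h1] at h2
    simp only [← Complex.normSq_eq_norm_sq] at h2
    rw [← hv] at h2
    linarith
  have hc : ∀ (c : ℝ) (z w : ℂ), RCLike.re (star z * ((c : ℂ) * w)) =
      c * (z.re * w.re + z.im * w.im) := by
    intro c z w
    simp; ring
  have hq : hM.eigenvalues k = ∑ i, (b ^ 2 - 2 * a * b * s i ^ 2) * Complex.normSq (v i) +
      a ^ 2 * ((∑ i, s i * (v i).re) ^ 2 + (∑ i, s i * (v i).im) ^ 2) := by
    have h1 := hM.eigenvalues_eq k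
    rw [← hv] at h1
    rw [h1, sq (∑ i, s i * (v i).re), sq (∑ i, s i * (v i).im), Finset.sum_mul_sum,
      Finset.sum_mul_sum, ← Finset.sum_add_distrib, Finset.mul_sum, ← Finset.sum_add_distrib,
      dotProduct, map_sum]
    refine Finset.sum_congr rfl fun i _ => ?_
    have h3 : (schmidtBlock a b s *ᵥ v) i =
        (b ^ 2 - 2 * a * b * s i ^ 2 : ℝ) * v i + ∑ j, ((a ^ 2 * (s i * s j) : ℝ) : ℂ) * v j := by
      simp only [mulVec, dotProduct, schmidtBlock, of_apply, Complex.ofReal_add, add_mul,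
        Finset.sum_add_distrib]
      congr 1
      rw [Finset.sum_eq_single i]
      · simp
      · intro j _ hj; simp [Ne.symm hj]
      · simp
    rw [h3, mul_add, map_add, Finset.mul_sum, map_sum, ← Finset.sum_add_distrib, Finset.mul_sum]
    congr 1
    · rw [Pi.star_apply, hc, Complex.normSq_apply]
    · refine Finset.sum_congr rfl fun j _ => ?_
      rw [Pi.star_apply, hc]; ring
  have hre := quad_form_nonneg s (fun i => (v i).re) hs
  have him := quad_form_nonneg s (fun i => (v i).im) hs
  have hsum : ∑ i, (1 - 2 * s i ^ 2) * (v i).re ^ 2 + ∑ i, (1 - 2 * s i ^ 2) * (v i).im ^ 2 =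
      ∑ i, (1 - 2 * s i ^ 2) * Complex.normSq (v i) := by
    rw [← Finset.sum_add_distrib]
    exact Finset.sum_congr rfl fun j _ => by rw [Complex.normSq_apply]; ring
  have hrest : 0 ≤ ∑ i, (1 - s i ^ 2) * Complex.normSq (v i) := by
    refine Finset.sum_nonneg fun i _ => mul_nonneg ?_ (Complex.normSq_nonneg _)
    have := Finset.single_le_sum (f := fun j => s j ^ 2) (fun j _ => sq_nonneg _)
      (Finset.mem_univ i)
    simp only [hs] at this
    linarith
  have hcomb : ∑ i, (b ^ 2 - 2 * a * b * s i ^ 2) * Complex.normSq (v i) =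
      (b - a) ^ 2 * ∑ i, Complex.normSq (v i) +
      a ^ 2 * ∑ i, (1 - 2 * s i ^ 2) * Complex.normSq (v i) +
      2 * a * (b - a) * ∑ i, (1 - s i ^ 2) * Complex.normSq (v i) := by
    simp only [Finset.mul_sum, ← Finset.sum_add_distrib]
    exact Finset.sum_congr rfl fun j _ => by ring
  have h5 : 0 ≤ 2 * a * (b - a) * ∑ i, (1 - s i ^ 2) * Complex.normSq (v i) :=
    mul_nonneg (mul_nonneg (by linarith) (by linarith)) hrest
  have h6 := mul_nonneg (sq_nonneg a) (add_nonneg hre him)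
  rw [hq, hcomb, hnorm, ← hsum]
  linarith

lemma sum_sq_eigenvalues {n : Type*} [Fintype n] [DecidableEq n] {A : Matrix n n ℂ}
    (hA : A.IsHermitian) :
    (A * A).trace = ((∑ i, hA.eigenvalues i ^ 2 : ℝ) : ℂ) := by
  obtain ⟨V, hV, hV', hAV⟩ := exists_unitary_diag hA
  have : A * A = V * (diagonal (fun i => ((hA.eigenvalues i ^ 2 : ℝ) : ℂ)) * Vᴴ) := by
    conv_lhs => rw [hAV]
    rw [mul_assoc, mul_assoc, ← mul_assoc Vᴴ, ← mul_assoc Vᴴ, hV, one_mul, ← mul_assoc (diagonal _),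
      diagonal_mul_diagonal]
    congr 3
    ext i; push_cast; ring_nf
  rw [this, trace_mul_comm, mul_assoc, hV, mul_one, trace_diagonal]
  push_cast; rfl

/-- Among all Schmidt vectors the block has least entropy at a product input: the trace does not
depend on `s`, the trace of the square is largest there, and `negMulLog` lies above a concave
quadratic agreeing with it on the spectrum at a product input. -/
lemma schmidtBlock_entropy {d : ℕ} {a b : ℝ} (ha : 0 ≤ a)
    (hab : a ≤ b) (hb : 0 < b) (s : Fin d → ℝ) (hs : ∑ i, s i ^ 2 = 1) :
    ((d : ℝ) - 1) * Real.negMulLog (b ^ 2) + Real.negMulLog ((b - a) ^ 2) ≤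
      ∑ k, Real.negMulLog ((schmidtBlock_isHermitian a b s).eigenvalues k) := by
  set hM := schmidtBlock_isHermitian a b s
  have htr : ∑ k, hM.eigenvalues k = d * b ^ 2 - 2 * a * b + a ^ 2 := by
    have h1 := hM.trace_eq_sum_eigenvalues
    have h2 : (schmidtBlock a b s).trace = ((d * b ^ 2 - 2 * a * b + a ^ 2 : ℝ) : ℂ) := by
      have : ∑ i, (b ^ 2 - 2 * a * b * s i ^ 2 + a ^ 2 * (s i * s i)) =
          d * b ^ 2 - 2 * a * b + a ^ 2 := by
        simp only [← sq, Finset.sum_add_distrib, Finset.sum_sub_distrib, ← Finset.mul_sum, hs]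
        simp
      rw [← this, trace]
      simp [schmidtBlock, diag]
    rw [h2] at h1
    have h3 := congrArg Complex.re h1.symm
    rw [Complex.ofReal_re] at h3
    rw [← h3]; simp
  have htr2 : ∑ k, hM.eigenvalues k ^ 2 =
      d * b ^ 4 - 4 * a * b ^ 3 + 2 * a ^ 2 * b ^ 2 + a ^ 4 +
        4 * a ^ 2 * b * (b - a) * ∑ i, s i ^ 4 := by
    have h1 := sum_sq_eigenvalues hM
    have h2 : ((schmidtBlock a b s) * (schmidtBlock a b s)).trace =
        ((∑ i, ∑ j, ((if i = j then b ^ 2 - 2 * a * b * s i ^ 2 else 0) + a ^ 2 * (s i * s j)) ^ 2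
          : ℝ) : ℂ) := by
      rw [trace]
      push_cast
      refine Finset.sum_congr rfl fun i _ => ?_
      rw [diag_apply, mul_apply]
      refine Finset.sum_congr rfl fun j _ => ?_
      rw [schmidtBlock_symm a b s i j, sq]
      simp [schmidtBlock]
    rw [h2] at h1
    have h3 := Complex.ofReal_injective h1
    rw [← h3]
    have h4 : ∀ i, ∑ j, ((if i = j then b ^ 2 - 2 * a * b * s i ^ 2 else 0)
        + a ^ 2 * (s i * s j)) ^ 2 = (b ^ 2 - 2 * a * b * s i ^ 2) ^ 2 +
        2 * (b ^ 2 - 2 * a * b * s i ^ 2) * (a ^ 2 * s i ^ 2) + a ^ 4 * s i ^ 2 := by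
      intro i
      have h5 : ∀ j, ((if i = j then b ^ 2 - 2 * a * b * s i ^ 2 else 0)
        + a ^ 2 * (s i * s j)) ^ 2 = (if i = j then (b ^ 2 - 2 * a * b * s i ^ 2) ^ 2 +
        2 * (b ^ 2 - 2 * a * b * s i ^ 2) * (a ^ 2 * s i ^ 2) else 0) +
          a ^ 4 * s i ^ 2 * s j ^ 2 := by
        intro j
        split_ifs with h
        · subst h; ring
        · ring
      simp only [h5, Finset.sum_add_distrib, ← Finset.mul_sum, hs]
      simp
    have h6 : ∀ i, (b ^ 2 - 2 * a * b * s i ^ 2) ^ 2 +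
        2 * (b ^ 2 - 2 * a * b * s i ^ 2) * (a ^ 2 * s i ^ 2) + a ^ 4 * s i ^ 2 =
        b ^ 4 + (- 4 * a * b ^ 3 + 2 * a ^ 2 * b ^ 2 + a ^ 4) * s i ^ 2 +
          4 * a ^ 2 * b * (b - a) * s i ^ 4 := fun i => by ring
    simp only [h4, h6, Finset.sum_add_distrib, ← Finset.mul_sum, hs]
    simp; ring
  have hs4 : ∑ i, s i ^ 4 ≤ 1 := by
    rw [← hs]
    refine Finset.sum_le_sum fun i _ => ?_
    have := Finset.single_le_sum (f := fun j => s j ^ 2) (fun j _ => sq_nonneg _)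
      (Finset.mem_univ i)
    simp only [hs] at this
    nlinarith [sq_nonneg (s i)]
  obtain ⟨β, γ, hγ, he, hl⟩ := exists_quad_le_negMulLog (x₀ := (b - a) ^ 2) (y := b ^ 2)
    (sq_nonneg _) (pow_le_pow_left₀ (by linarith) (by linarith) 2) (by positivity)
  have h1 : ∑ k, (Real.negMulLog (b ^ 2) + β * (hM.eigenvalues k - b ^ 2) -
      γ * (hM.eigenvalues k - b ^ 2) ^ 2) ≤ ∑ k, Real.negMulLog (hM.eigenvalues k) :=
    Finset.sum_le_sum fun k _ => hl _ (schmidtBlock_eigenvalues_ge ha hab s hs k)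
  have h2 : ∑ k, (Real.negMulLog (b ^ 2) + β * (hM.eigenvalues k - b ^ 2) -
      γ * (hM.eigenvalues k - b ^ 2) ^ 2) =
      d * Real.negMulLog (b ^ 2) + β * (∑ k, hM.eigenvalues k - d * b ^ 2) -
      γ * (∑ k, hM.eigenvalues k ^ 2 - 2 * b ^ 2 * ∑ k, hM.eigenvalues k + d * b ^ 4) := by
    have : ∀ k, Real.negMulLog (b ^ 2) + β * (hM.eigenvalues k - b ^ 2) -
      γ * (hM.eigenvalues k - b ^ 2) ^ 2 = (Real.negMulLog (b ^ 2) - β * b ^ 2 - γ * b ^ 4) +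
        (β + 2 * γ * b ^ 2) * hM.eigenvalues k - γ * hM.eigenvalues k ^ 2 := fun k => by ring
    simp only [this, Finset.sum_add_distrib, Finset.sum_sub_distrib, ← Finset.mul_sum]
    simp; ring
  rw [h2, htr, htr2] at h1
  have h3 : 0 ≤ γ * (4 * a ^ 2 * b * (b - a)) * (1 - ∑ i, s i ^ 4) := by
    refine mul_nonneg (mul_nonneg hγ (mul_nonneg (by positivity) (by linarith))) (by linarith)
  rw [he]
  linarith

/-! ### The two-copy output of a Schmidt vector -/

/-- The full two-copy output for the input `∑ i, s i • e_i ⊗ e_i`: diagonal on the vectors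
`e_k ⊗ e_l`, plus a rank-one term supported on the span of the vectors `e_i ⊗ e_i`. As in
`schmidtBlock`, `a = -t` and `b = (1 - t) / d`. -/
def schmidtOutput {n : Type*} [DecidableEq n] (a b : ℝ) (s : n → ℝ) : Matrix (n × n) (n × n) ℂ :=
  of fun p q => (((if p = q then b ^ 2 - a * b * (s p.1 ^ 2 + s p.2 ^ 2) else 0) +
    (if p.1 = p.2 ∧ q.1 = q.2 then a ^ 2 * (s p.1 * s q.1) else 0) : ℝ) : ℂ)

lemma schmidtOutput_isHermitian {n : Type*} [DecidableEq n] (a b : ℝ) (s : n → ℝ) :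
    (schmidtOutput a b s).IsHermitian := by
  ext p q
  simp only [schmidtOutput, conjTranspose_apply, of_apply, Complex.star_def, Complex.conj_ofReal]
  congr 2
  · by_cases h : p = q
    · subst h; rfl
    · rw [if_neg h, if_neg (Ne.symm h)]
  · rw [mul_comm (s q.1)]
    exact if_congr and_comm rfl rfl

/-- Splits the index pairs into the diagonal and its complement. -/
def diagSplit (n : Type*) [DecidableEq n] : n ⊕ {p : n × n // ¬ p.1 = p.2} ≃ n × n :=
  (Equiv.sumCongr
    ({ toFun := fun i => ⟨(i, i), rfl⟩
       invFun := fun p => p.1.1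
       left_inv := fun _ => rfl
       right_inv := fun p => by
        obtain ⟨⟨i, j⟩, h⟩ := p
        have h : i = j := h
        subst h; rfl } : n ≃ {p : n × n // p.1 = p.2})
    (Equiv.refl _)).trans (Equiv.sumCompl fun p : n × n => p.1 = p.2)

lemma diagSplit_inl {n : Type*} [DecidableEq n] (i : n) : diagSplit n (.inl i) = (i, i) := rfl
lemma diagSplit_inr {n : Type*} [DecidableEq n] (p : {p : n × n // ¬ p.1 = p.2}) :
    diagSplit n (.inr p) = p.1 := rfl

/-- The spectrum of the two-copy output, indexed by the two invariant subspaces. -/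
noncomputable def schmidtSpectrum {n : Type*} [Fintype n] [DecidableEq n] (a b : ℝ) (s : n → ℝ) :
    n ⊕ {p : n × n // ¬ p.1 = p.2} → ℝ :=
  Sum.elim (schmidtBlock_isHermitian a b s).eigenvalues
    (fun p => b ^ 2 - a * b * (s p.1.1 ^ 2 + s p.1.2 ^ 2))

open Polynomial in
/-- The output is block diagonal with respect to `diagSplit`, with blocks `schmidtBlock` and a
diagonal matrix. -/
lemma schmidtOutput_charpoly {n : Type*} [Fintype n] [DecidableEq n] (a b : ℝ) (s : n → ℝ) :
    (schmidtOutput a b s).charpoly = ∏ k, (X - C ((schmidtSpectrum a b s k : ℝ) : ℂ)) := by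
  have h : reindex (diagSplit n).symm (diagSplit n).symm (schmidtOutput a b s) =
      fromBlocks (schmidtBlock a b s) 0 0 (diagonal fun p : {p : n × n // ¬ p.1 = p.2} =>
        ((b ^ 2 - a * b * (s p.1.1 ^ 2 + s p.1.2 ^ 2) : ℝ) : ℂ)) := by
    ext p q
    rw [reindex_apply, submatrix_apply, Equiv.symm_symm]
    rcases p with i | p <;> rcases q with j | q
    · rw [diagSplit_inl, diagSplit_inl, fromBlocks_apply₁₁]
      simp only [schmidtOutput, schmidtBlock, of_apply, Prod.mk.injEq, and_self, if_true]
      congr 2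
      exact if_congr Iff.rfl (by ring) rfl
    · rw [diagSplit_inl, diagSplit_inr, fromBlocks_apply₁₂]
      have : ¬ (i, i) = q.1 := fun h => q.2 (by rw [← h])
      simp [schmidtOutput, this, q.2]
    · rw [diagSplit_inl, diagSplit_inr, fromBlocks_apply₂₁]
      have : ¬ p.1 = (j, j) := fun h => p.2 (by rw [h])
      simp [schmidtOutput, this, p.2]
    · rw [diagSplit_inr, diagSplit_inr, fromBlocks_apply₂₂, diagonal_apply]
      by_cases hpq : p.1 = q.1 <;> simp [schmidtOutput, p.2, q.2, Subtype.ext_iff, hpq]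
  rw [← charpoly_reindex (diagSplit n).symm, h, charpoly_fromBlocks_zero₁₂, charpoly_diagonal,
    (schmidtBlock_isHermitian a b s).charpoly_eq, Fintype.prod_sum_type]
  rfl

lemma schmidt_sq_add_sq_le_one {n : Type*} [Fintype n] [DecidableEq n] (s : n → ℝ)
    (hs : ∑ i, s i ^ 2 = 1) {i j : n} (hij : ¬ i = j) : s i ^ 2 + s j ^ 2 ≤ 1 := by
  rw [← hs, ← Finset.sum_pair (f := fun i => s i ^ 2) hij]
  exact Finset.sum_le_sum_of_subset_of_nonneg (Finset.subset_univ _) fun _ _ _ => sq_nonneg _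

lemma schmidtSpectrum_nonneg {n : Type*} [Fintype n] [DecidableEq n] {a b : ℝ} (ha : 0 ≤ a)
    (hab : a ≤ b) (s : n → ℝ) (hs : ∑ i, s i ^ 2 = 1) (k) : 0 ≤ schmidtSpectrum a b s k := by
  rcases k with i | ⟨p, hp⟩
  · exact (sq_nonneg _).trans (schmidtBlock_eigenvalues_ge ha hab s hs i)
  · have h1 := schmidt_sq_add_sq_le_one s hs hp
    have h2 : 0 ≤ a * b := mul_nonneg ha (ha.trans hab)
    simp only [schmidtSpectrum, Sum.elim_inr]
    nlinarith

/-- Off the block the eigenvalues are affine in the squared Schmidt coefficients, so concavity of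
`negMulLog` gives the bound. -/
lemma offDiag_entropy {d : ℕ} {a b : ℝ} (ha : 0 ≤ a) (hab : a ≤ b) (s : Fin d → ℝ)
    (hs : ∑ i, s i ^ 2 = 1) :
    ((d : ℝ) - 1) * (d - 2) * Real.negMulLog (b ^ 2) +
        2 * ((d : ℝ) - 1) * Real.negMulLog (b * (b - a)) ≤
      ∑ p : {p : Fin d × Fin d // ¬ p.1 = p.2},
        Real.negMulLog (b ^ 2 - a * b * (s p.1.1 ^ 2 + s p.1.2 ^ 2)) := by
  set A := Real.negMulLog (b ^ 2)
  set B := Real.negMulLog (b * (b - a))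
  have h1 : ∑ p : {p : Fin d × Fin d // ¬ p.1 = p.2},
      (A + (B - A) * (s p.1.1 ^ 2 + s p.1.2 ^ 2)) =
      ((d : ℝ) - 1) * (d - 2) * A + 2 * ((d : ℝ) - 1) * B := by
    have h2 := Equiv.sum_comp (diagSplit (Fin d))
      (fun p : Fin d × Fin d => A + (B - A) * (s p.1 ^ 2 + s p.2 ^ 2))
    rw [Fintype.sum_sum_type] at h2
    simp only [diagSplit_inl, diagSplit_inr] at h2
    have h3 : ∑ p : Fin d × Fin d, (A + (B - A) * (s p.1 ^ 2 + s p.2 ^ 2)) =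
        d * d * A + (B - A) * (2 * d) := by
      rw [Fintype.sum_prod_type]
      have h5 : ∀ i : Fin d, ∑ j, (A + (B - A) * (s i ^ 2 + s j ^ 2)) =
          d * A + (B - A) * 1 + (B - A) * d * s i ^ 2 := by
        intro i
        rw [← hs, Finset.sum_add_distrib, ← Finset.mul_sum, Finset.sum_add_distrib]
        simp only [Finset.sum_const, Finset.card_univ, Fintype.card_fin, nsmul_eq_mul]
        ring
      simp only [h5, Finset.sum_add_distrib, ← Finset.mul_sum, hs, Finset.sum_const,
        Finset.card_univ, Fintype.card_fin, nsmul_eq_mul]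
      ring
    have h4 : ∑ i : Fin d, (A + (B - A) * (s i ^ 2 + s i ^ 2)) = d * A + (B - A) * 2 := by
      simp only [Finset.sum_add_distrib, ← Finset.mul_sum, hs, Finset.sum_const,
        Finset.card_univ, Fintype.card_fin, nsmul_eq_mul]
      ring
    rw [h3, h4] at h2
    linarith
  rw [← h1]
  refine Finset.sum_le_sum fun p _ => ?_
  have hu := schmidt_sq_add_sq_le_one s hs p.2
  have hu0 : 0 ≤ s p.1.1 ^ 2 + s p.1.2 ^ 2 := by positivity
  have := Real.concaveOn_negMulLog.2 (x := b ^ 2) (y := b * (b - a)) (sq_nonneg b)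
    (mul_nonneg (ha.trans hab) (by linarith)) (sub_nonneg.2 hu) hu0 (by ring)
  simp only [smul_eq_mul] at this
  refine le_trans (le_of_eq ?_) (this.trans (le_of_eq ?_))
  · simp only [A, B]; ring
  · congr 1; ring

/-- `2 h(Φ)` splits as the sum of the two block bounds because `negMulLog` is a
derivation under products and `(d - 1) b + (b - a) = 1`. -/
lemma schmidtOutput_entropy {d : ℕ} {a b : ℝ} (ha : 0 ≤ a) (hab : a ≤ b) (hb : 0 < b)
    (hdb : d * b - a = 1) (s : Fin d → ℝ) (hs : ∑ i, s i ^ 2 = 1) :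
    2 * (((d : ℝ) - 1) * Real.negMulLog b + Real.negMulLog (b - a)) ≤
      ∑ k, Real.negMulLog (schmidtSpectrum a b s k) := by
  rw [Fintype.sum_sum_type]
  have h1 := schmidtBlock_entropy ha hab hb s hs
  have h2 := offDiag_entropy ha hab s hs
  simp only [schmidtSpectrum, Sum.elim_inl, Sum.elim_inr]
  refine le_trans (le_of_eq ?_) (add_le_add h1 h2)
  rw [sq b, sq (b - a), Real.negMulLog_mul, Real.negMulLog_mul, Real.negMulLog_mul]
  have h3 : a = d * b - 1 := by linarith
  rw [h3]; ring

/-- A linear map on bipartite matrices is determined by its values on Kronecker products. -/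
lemma linearMap_ext_kronecker {n M : Type*} [Fintype n] [DecidableEq n] [AddCommMonoid M]
    [Module ℂ M] (F G : Matrix (n × n) (n × n) ℂ →ₗ[ℂ] M)
    (h : ∀ A B : Matrix n n ℂ, F (A ⊗ₖ B) = G (A ⊗ₖ B)) : F = G := by
  ext1 ρ
  rw [matrix_eq_sum_single ρ]
  simp only [map_sum]
  refine Finset.sum_congr rfl fun p _ => Finset.sum_congr rfl fun q _ => ?_
  have := h (single p.1 q.1 (ρ p q)) (single p.2 q.2 1)
  rwa [single_kronecker_single, mul_one] at this

/-- Covariance of a single channel: conjugation by `U` on the input becomes conjugation by the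
entrywise conjugate of `U` on the output. -/
lemma transposeDepolarizing_conj (d : ℕ) (t : ℝ) {U : Matrix (Fin d) (Fin d) ℂ}
    (hU : Uᴴ * U = 1) (hU' : U * Uᴴ = 1) (A : Matrix (Fin d) (Fin d) ℂ) :
    transposeDepolarizing d t (U * A * Uᴴ) =
      Uᴴᵀ * transposeDepolarizing d t A * Uᴴᵀᴴ := by
  have h1 : Uᴴᵀᴴ = Uᵀ := by ext i j; simp
  have h2 : Uᴴᵀ * Uᵀ = 1 := by rw [← transpose_mul, hU', transpose_one]
  have h3 : (U * A * Uᴴ).trace = A.trace := by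
    rw [trace_mul_comm, ← mul_assoc, hU, one_mul]
  rw [transposeDepolarizing, transposeDepolarizing, h3, h1]
  simp only [mul_add, add_mul, transpose_mul, mul_smul_comm, smul_mul_assoc, mul_one, h2,
    mul_assoc]

lemma transposeDepolarizing_diagonal (d : ℕ) (t : ℝ) (p : Fin d → ℝ) (hp : ∑ i, p i = 1) :
    transposeDepolarizing d t (diagonal fun i => ((p i : ℝ) : ℂ)) =
      diagonal fun i => ((t * p i + (1 - t) / d : ℝ) : ℂ) := by
  have : (diagonal fun i => ((p i : ℝ) : ℂ)).trace = 1 := by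
    rw [trace_diagonal, ← Complex.ofReal_sum, hp, Complex.ofReal_one]
  rw [transposeDepolarizing, this, diagonal_transpose]
  ext i j
  by_cases h : i = j
  · subst h; simp
  · simp [h]

/-- Covariance of the channel pair under local unitaries. -/
lemma two_copy_conj (d : ℕ) (t : ℝ)
    (Ψ : Matrix (Fin d × Fin d) (Fin d × Fin d) ℂ →ₗ[ℂ]
         Matrix (Fin d × Fin d) (Fin d × Fin d) ℂ)
    (hΨ : ∀ A B : Matrix (Fin d) (Fin d) ℂ,
      Ψ (A ⊗ₖ B) = (transposeDepolarizing d t A) ⊗ₖ (transposeDepolarizing d t B))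
    {U V : Matrix (Fin d) (Fin d) ℂ} (hU : Uᴴ * U = 1) (hU' : U * Uᴴ = 1)
    (hV : Vᴴ * V = 1) (hV' : V * Vᴴ = 1) (ρ : Matrix (Fin d × Fin d) (Fin d × Fin d) ℂ) :
    Ψ ((U ⊗ₖ V) * ρ * (U ⊗ₖ V)ᴴ) = (Uᴴᵀ ⊗ₖ Vᴴᵀ) * Ψ ρ * (Uᴴᵀ ⊗ₖ Vᴴᵀ)ᴴ := by
  have := linearMap_ext_kronecker
    (Ψ ∘ₗ LinearMap.mulRight ℂ (U ⊗ₖ V)ᴴ ∘ₗ LinearMap.mulLeft ℂ (U ⊗ₖ V))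
    (LinearMap.mulRight ℂ (Uᴴᵀ ⊗ₖ Vᴴᵀ)ᴴ ∘ₗ LinearMap.mulLeft ℂ (Uᴴᵀ ⊗ₖ Vᴴᵀ) ∘ₗ Ψ) (by
      intro A B
      simp only [LinearMap.comp_apply, LinearMap.mulLeft_apply, LinearMap.mulRight_apply,
        conjTranspose_kronecker, ← mul_kronecker_mul, hΨ, transposeDepolarizing_conj d t hU hU',
        transposeDepolarizing_conj d t hV hV'])
  exact LinearMap.congr_fun this ρ

/-- The vector `∑ i, s i • e_i ⊗ e_i`. -/
def schmidtVec {n : Type*} [DecidableEq n] (s : n → ℝ) : n × n → ℂ :=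
  fun p => if p.1 = p.2 then ((s p.1 : ℝ) : ℂ) else 0

/-- The two-copy output for a pure input in Schmidt form. -/
lemma two_copy_schmidt (d : ℕ) (t : ℝ)
    (Ψ : Matrix (Fin d × Fin d) (Fin d × Fin d) ℂ →ₗ[ℂ]
         Matrix (Fin d × Fin d) (Fin d × Fin d) ℂ)
    (hΨ : ∀ A B : Matrix (Fin d) (Fin d) ℂ,
      Ψ (A ⊗ₖ B) = (transposeDepolarizing d t A) ⊗ₖ (transposeDepolarizing d t B))
    (s : Fin d → ℝ) (hs : ∑ i, s i ^ 2 = 1) :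
    Ψ (vecMulVec (schmidtVec s) (star (schmidtVec s))) = schmidtOutput (-t) ((1 - t) / d) s := by
  have h1 : vecMulVec (schmidtVec s) (star (schmidtVec s)) =
      ∑ i, ∑ j, ((s i * s j : ℝ) : ℂ) • (single i j (1 : ℂ) ⊗ₖ single i j (1 : ℂ)) := by
    ext ⟨k, l⟩ ⟨m, n⟩
    simp only [Matrix.sum_apply, Matrix.smul_apply, kroneckerMap_apply, single_apply,
      vecMulVec_apply, schmidtVec, Pi.star_apply]
    rw [Finset.sum_eq_single k, Finset.sum_eq_single m]
    · by_cases h : k = l <;> by_cases h' : m = n <;> simp [h, h']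
    · intro j _ hj; simp [hj]
    · simp
    · intro j _ hj; simp [hj]
    · simp
  have h2 : ∀ i j k m : Fin d, transposeDepolarizing d t (single i j 1) k m =
      (if j = k ∧ i = m then (t : ℂ) else 0) +
        (if i = j then if k = m then (((1 - t) / d : ℝ) : ℂ) else 0 else 0) := by
    intro i j k m
    simp only [transposeDepolarizing, Matrix.add_apply, Matrix.smul_apply, transpose_apply,
      single_apply, one_apply, smul_eq_mul]
    congr 1
    · simp [and_comm]
    · by_cases h : i = j
      · subst h; by_cases h' : k = m <;> simp [h']
      · simp [h, Matrix.trace_single_eq_of_ne]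
  rw [h1]
  simp only [map_sum, map_smul, hΨ]
  generalize (1 - t) / d = b at *
  ext ⟨k, l⟩ ⟨m, n⟩
  simp only [Matrix.sum_apply, Matrix.smul_apply, kroneckerMap_apply, h2, smul_eq_mul]
  -- expanding the tensor product gives four terms, one for each choice of a summand per factor
  have e1 : ∑ i, ∑ j, ((s i * s j : ℝ) : ℂ) * ((if j = k ∧ i = m then (t : ℂ) else 0) *
      (if j = l ∧ i = n then (t : ℂ) else 0)) =
      if k = l ∧ m = n then (t : ℂ) ^ 2 * (s k * s m) else 0 := by
    rw [Finset.sum_eq_single m, Finset.sum_eq_single k]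
    · by_cases h : k = l <;> by_cases h' : m = n <;> simp [h, h']
      subst h h'; ring
    · intro j _ hj; simp [hj]
    · simp
    · intro j _ hj; simp [hj]
    · simp
  have e2 : ∑ i, ∑ j, ((s i * s j : ℝ) : ℂ) * ((if j = k ∧ i = m then (t : ℂ) else 0) *
      (if i = j then if l = n then (b : ℂ) else 0 else 0)) =
      if k = m ∧ l = n then (t : ℂ) * b * s k ^ 2 else 0 := by
    rw [Finset.sum_eq_single m, Finset.sum_eq_single k]
    · rcases eq_or_ne k m with rfl | h
      · by_cases h' : l = n <;> simp [h']
        ring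
      · simp [h, h.symm]
    · intro j _ hj; simp [hj]
    · simp
    · intro j _ hj; simp [hj]
    · simp
  have e3 : ∑ i, ∑ j, ((s i * s j : ℝ) : ℂ) *
      ((if i = j then if k = m then (b : ℂ) else 0 else 0) *
        (if j = l ∧ i = n then (t : ℂ) else 0)) =
      if k = m ∧ l = n then (t : ℂ) * b * s l ^ 2 else 0 := by
    rw [Finset.sum_eq_single n, Finset.sum_eq_single l]
    · rcases eq_or_ne l n with rfl | h
      · by_cases h' : k = m <;> simp [h']
        ring
      · simp [h, h.symm]
    · intro j _ hj; simp [hj]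
    · simp
    · intro j _ hj; simp [hj]
    · simp
  have e4 : ∑ i, ∑ j, ((s i * s j : ℝ) : ℂ) *
      ((if i = j then if k = m then (b : ℂ) else 0 else 0) *
        (if i = j then if l = n then (b : ℂ) else 0 else 0)) =
      if k = m ∧ l = n then (b : ℂ) ^ 2 else 0 := by
    have h5 : ∀ i, ∑ j, ((s i * s j : ℝ) : ℂ) *
        ((if i = j then if k = m then (b : ℂ) else 0 else 0) *
          (if i = j then if l = n then (b : ℂ) else 0 else 0)) =
        (if k = m ∧ l = n then (b : ℂ) ^ 2 else 0) * ((s i ^ 2 : ℝ) : ℂ) := by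
      intro i
      rw [Finset.sum_eq_single i]
      · by_cases h : k = m <;> by_cases h' : l = n <;> simp [h, h']
        ring
      · intro j _ hj; simp [Ne.symm hj]
      · simp
    rw [Finset.sum_congr rfl fun i _ => h5 i, ← Finset.mul_sum, ← Complex.ofReal_sum, hs,
      Complex.ofReal_one, mul_one]
  simp only [mul_add, add_mul, Finset.sum_add_distrib]
  rw [e1, e2, e3, e4]
  simp only [schmidtOutput, of_apply, Prod.mk.injEq]
  split_ifs <;> push_cast <;> ring

/-! ### Minimal output entropies -/

/-- Schmidt decomposition of a bipartite vector, from the singular value decomposition of its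
coefficient matrix. -/
lemma exists_schmidt (d : ℕ) (ψ : Fin d × Fin d → ℂ) :
    ∃ (U V : Matrix (Fin d) (Fin d) ℂ) (s : Fin d → ℝ),
      Uᴴ * U = 1 ∧ U * Uᴴ = 1 ∧ Vᴴ * V = 1 ∧ V * Vᴴ = 1 ∧ ψ = (U ⊗ₖ V) *ᵥ schmidtVec s := by
  obtain ⟨U, V, s, hU, hV', hV, h⟩ := exists_svd (of fun i j => ψ (i, j))
  have e1 : Vᴴᵀᴴ = Vᵀ := by ext i j; simp
  refine ⟨U, Vᴴᵀ, s, hU, mul_eq_one_comm.1 hU, ?_, ?_, ?_⟩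
  · rw [e1, ← transpose_mul, hV, transpose_one]
  · rw [e1, ← transpose_mul, hV', transpose_one]
  · ext ⟨i, j⟩
    have h1 := congrFun (congrFun h i) j
    rw [of_apply] at h1
    rw [h1, mul_apply, mulVec, dotProduct, Fintype.sum_prod_type]
    refine Finset.sum_congr rfl fun k _ => ?_
    rw [Finset.sum_eq_single k]
    · simp [schmidtVec, mul_diagonal]; ring
    · intro l _ hl; simp [schmidtVec, hl.symm]
    · simp

/-- A pure state of the pair yields a positive semidefinite two-copy output with entropy at least
twice the one-copy minimum: up to local unitaries it is in Schmidt form, where the output spectrum is known. -/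
lemma two_copy_pure (d : ℕ) (t : ℝ) (hd : 0 < d) (ht : t ≤ 0)
    (hab : -t ≤ (1 - t) / d)
    (Ψ : Matrix (Fin d × Fin d) (Fin d × Fin d) ℂ →ₗ[ℂ]
         Matrix (Fin d × Fin d) (Fin d × Fin d) ℂ)
    (hΨ : ∀ A B : Matrix (Fin d) (Fin d) ℂ,
      Ψ (A ⊗ₖ B) = (transposeDepolarizing d t A) ⊗ₖ (transposeDepolarizing d t B))
    (ψ : Fin d × Fin d → ℂ) (hψ : (vecMulVec ψ (star ψ)).trace = 1) :
    (Ψ (vecMulVec ψ (star ψ))).PosSemidef ∧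
    2 * (((d : ℝ) - 1) * Real.negMulLog ((1 - t) / d) + Real.negMulLog ((1 - t) / d - -t)) ≤
      vnEntropy (Ψ (vecMulVec ψ (star ψ))) := by
  obtain ⟨U, V, s, hU, hU', hV, hV', h⟩ := exists_schmidt d ψ
  have hd' : (0 : ℝ) < d := by exact_mod_cast hd
  have hW : (U ⊗ₖ V)ᴴ * (U ⊗ₖ V) = 1 := by
    rw [conjTranspose_kronecker, ← mul_kronecker_mul, hU, hV, one_kronecker_one]
  have hpure : vecMulVec ψ (star ψ) =
      (U ⊗ₖ V) * vecMulVec (schmidtVec s) (star (schmidtVec s)) * (U ⊗ₖ V)ᴴ := by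
    rw [mul_vecMulVec, vecMulVec_mul, ← star_mulVec, ← h]
  have hs : ∑ i, s i ^ 2 = 1 := by
    rw [hpure, trace_mul_comm, ← mul_assoc, hW, one_mul, trace_vecMulVec, dotProduct,
      Fintype.sum_prod_type] at hψ
    have h2 : ∀ i, ∑ j, schmidtVec s (i, j) * (star (schmidtVec s)) (i, j) =
        ((s i ^ 2 : ℝ) : ℂ) := by
      intro i
      rw [Finset.sum_eq_single i]
      · simp [schmidtVec, sq]
      · intro j _ hj; simp [schmidtVec, hj.symm]
      · simp
    rw [Finset.sum_congr rfl fun i _ => h2 i, ← Complex.ofReal_sum] at hψ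
    exact_mod_cast hψ
  have hUc : Uᴴᵀᴴ = Uᵀ := by ext i j; simp
  have hVc : Vᴴᵀᴴ = Vᵀ := by ext i j; simp
  have hW' : (Uᴴᵀ ⊗ₖ Vᴴᵀ)ᴴ * (Uᴴᵀ ⊗ₖ Vᴴᵀ) = 1 := by
    rw [conjTranspose_kronecker, ← mul_kronecker_mul, hUc, hVc, ← transpose_mul, ← transpose_mul,
      hU, hV, transpose_one, one_kronecker_one]
  have hout : Ψ (vecMulVec ψ (star ψ)) =
      (Uᴴᵀ ⊗ₖ Vᴴᵀ) * schmidtOutput (-t) ((1 - t) / d) s * (Uᴴᵀ ⊗ₖ Vᴴᵀ)ᴴ := by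
    rw [hpure, two_copy_conj d t Ψ hΨ hU hU' hV hV', two_copy_schmidt d t Ψ hΨ s hs]
  have hH : (Ψ (vecMulVec ψ (star ψ))).IsHermitian := by
    rw [hout]
    exact isHermitian_mul_mul_conjTranspose _ (schmidtOutput_isHermitian _ _ s)
  have hc := (charpoly_unitary_conj hW' _).trans (schmidtOutput_charpoly (-t) ((1 - t) / d) s)
  rw [← hout] at hc
  have ha : 0 ≤ -t := by linarith
  refine ⟨posSemidef_of_charpoly hH _ hc (schmidtSpectrum_nonneg ha hab s hs), ?_⟩
  rw [vnEntropy_eq_of_charpoly hH _ hc]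
  refine schmidtOutput_entropy ha hab (div_pos (by linarith) hd') ?_ s hs
  field_simp
  ring

/-- Spectral decomposition of a density matrix into pure states. -/
lemma density_eq_sum_pure {n : Type*} [Fintype n] [DecidableEq n] {ρ : Matrix n n ℂ}
    (hρ : IsDensityMatrix ρ) : ∃ (V : Matrix n n ℂ) (p : n → ℝ), (∀ k, 0 ≤ p k) ∧ ∑ k, p k = 1 ∧
      Vᴴ * V = 1 ∧ V * Vᴴ = 1 ∧ ρ = V * diagonal (fun k => ((p k : ℝ) : ℂ)) * Vᴴ := by
  obtain ⟨V, hV, hV', h⟩ := exists_unitary_diag hρ.1.isHermitian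
  refine ⟨V, hρ.1.isHermitian.eigenvalues, hρ.1.eigenvalues_nonneg, ?_, hV, hV', h⟩
  have h1 := hρ.1.isHermitian.trace_eq_sum_eigenvalues
  have h2 : ∑ k, ((hρ.1.isHermitian.eigenvalues k : ℝ) : ℂ) = 1 := h1.symm.trans hρ.2
  exact_mod_cast h2

lemma unitary_diag_eq_sum {n : Type*} [Fintype n] [DecidableEq n] (V : Matrix n n ℂ) (p : n → ℝ) :
    V * diagonal (fun k => ((p k : ℝ) : ℂ)) * Vᴴ =
      ∑ k, (p k : ℂ) • vecMulVec (fun i => V i k) (star fun i => V i k) := by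
  ext i j
  rw [mul_apply, Matrix.sum_apply]
  refine Finset.sum_congr rfl fun k _ => ?_
  simp [mul_diagonal, vecMulVec_apply]; ring

lemma vnEntropy_diagonal {n : Type*} [Fintype n] [DecidableEq n] (D : n → ℝ) :
    vnEntropy (diagonal fun i => ((D i : ℝ) : ℂ)) = ∑ i, Real.negMulLog (D i) :=
  vnEntropy_eq_of_charpoly (isHermitian_diagonal_of_self_adjoint _ (by ext i; simp)) D
    (charpoly_diagonal _)

/-- The pure state of a basis vector; it attains the minimal output entropy. -/
lemma isDensityMatrix_single {d : ℕ} (i₀ : Fin d) :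
    IsDensityMatrix (diagonal fun i => ((Pi.single (M := fun _ => ℝ) i₀ 1 i : ℝ) : ℂ)) := by
  constructor
  · rw [posSemidef_diagonal_iff]
    intro i
    rw [Complex.zero_le_real]
    by_cases h : i = i₀
    · subst h; simp
    · simp [h]
  · rw [trace_diagonal, ← Complex.ofReal_sum, Finset.sum_pi_single']
    simp

/-- A sum over the output spectrum of a basis state: one eigenvalue `b + t`, the others `b`. -/
lemma sum_single_output {d : ℕ} (i₀ : Fin d) (f : ℝ → ℝ) (t b : ℝ) :
    ∑ i, f (t * Pi.single (M := fun _ => ℝ) i₀ 1 i + b) = ((d : ℝ) - 1) * f b + f (b - -t) := by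
  rw [← Finset.add_sum_erase _ _ (Finset.mem_univ i₀)]
  have : ∀ i ∈ Finset.univ.erase i₀, f (t * Pi.single (M := fun _ => ℝ) i₀ 1 i + b) = f b := by
    intro i hi
    rw [Pi.single_eq_of_ne (Finset.ne_of_mem_erase hi), mul_zero, zero_add]
  rw [Finset.sum_congr rfl this, Finset.sum_const, Finset.card_erase_of_mem (Finset.mem_univ _),
    Finset.card_univ, Fintype.card_fin, nsmul_eq_mul, Nat.cast_pred i₀.pos, Pi.single_eq_same,
    mul_one, sub_neg_eq_add, add_comm b t]
  ring

/-- The one-copy minimal output entropy: the output spectrum of an input with spectrum `p` is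
`t p i + b`, so concavity of `negMulLog` makes pure inputs optimal. -/
lemma one_copy_isLeast (d : ℕ) (t : ℝ) (hd : 0 < d) (ht : t ≤ 0) (hab : -t ≤ (1 - t) / d) :
    IsLeast {x : ℝ | ∃ ρ, IsDensityMatrix ρ ∧ x = vnEntropy (transposeDepolarizing d t ρ)}
      (((d : ℝ) - 1) * Real.negMulLog ((1 - t) / d) + Real.negMulLog ((1 - t) / d - -t)) := by
  constructor
  · refine ⟨_, isDensityMatrix_single ⟨0, hd⟩, ?_⟩
    rw [transposeDepolarizing_diagonal d t _ (by rw [Finset.sum_pi_single']; simp),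
      vnEntropy_diagonal, sum_single_output]
  · rintro x ⟨ρ, hρ, rfl⟩
    obtain ⟨V, p, hp, hp1, hV, hV', rfl⟩ := density_eq_sum_pure hρ
    have e1 : Vᴴᵀᴴ = Vᵀ := by ext i j; simp
    have hW : Vᴴᵀᴴ * Vᴴᵀ = 1 := by rw [e1, ← transpose_mul, hV, transpose_one]
    rw [transposeDepolarizing_conj d t hV hV', transposeDepolarizing_diagonal d t p hp1]
    rw [vnEntropy_eq_of_charpoly (isHermitian_mul_mul_conjTranspose _
        (isHermitian_diagonal_of_self_adjoint _ (by ext i; simp))) _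
      ((charpoly_unitary_conj hW _).trans (charpoly_diagonal _))]
    set b := (1 - t) / (d : ℝ)
    have hp_le : ∀ i, p i ≤ 1 := fun i => by
      rw [← hp1]; exact Finset.single_le_sum (fun j _ => hp j) (Finset.mem_univ i)
    have h1 : ∀ i, (1 - p i) * Real.negMulLog b + p i * Real.negMulLog (b - -t) ≤
        Real.negMulLog (t * p i + b) := by
      intro i
      have := Real.concaveOn_negMulLog.2 (x := b) (y := b - -t)
        (Set.mem_Ici.2 (by linarith)) (Set.mem_Ici.2 (by linarith))
        (sub_nonneg.2 (hp_le i)) (hp i) (by ring)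
      simp only [smul_eq_mul] at this
      refine this.trans (le_of_eq ?_)
      congr 1; ring
    refine le_trans (le_of_eq ?_) (Finset.sum_le_sum fun i _ => h1 i)
    rw [Finset.sum_add_distrib, ← Finset.sum_mul, ← Finset.sum_mul, Finset.sum_sub_distrib, hp1]
    simp

/-- The two-copy minimal output entropy, attained at a product of basis states. Mixed inputs reduce
to pure ones by concavity of the entropy. -/
lemma two_copy_isLeast (d : ℕ) (t : ℝ) (hd : 0 < d) (ht : t ≤ 0) (hab : -t ≤ (1 - t) / d)
    (Ψ : Matrix (Fin d × Fin d) (Fin d × Fin d) ℂ →ₗ[ℂ]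
         Matrix (Fin d × Fin d) (Fin d × Fin d) ℂ)
    (hΨ : ∀ A B : Matrix (Fin d) (Fin d) ℂ,
      Ψ (A ⊗ₖ B) = (transposeDepolarizing d t A) ⊗ₖ (transposeDepolarizing d t B)) :
    IsLeast {x : ℝ | ∃ ρ, IsDensityMatrix ρ ∧ x = vnEntropy (Ψ ρ)}
      (2 * (((d : ℝ) - 1) * Real.negMulLog ((1 - t) / d) +
        Real.negMulLog ((1 - t) / d - -t))) := by
  constructor
  · have h0 := isDensityMatrix_single (⟨0, hd⟩ : Fin d)
    refine ⟨_ ⊗ₖ _, ⟨h0.1.kronecker h0.1, ?_⟩, ?_⟩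
    · rw [trace_kronecker, h0.2, one_mul]
    · set q : Fin d → ℝ := fun i => t * Pi.single (M := fun _ => ℝ) ⟨0, hd⟩ 1 i + (1 - t) / d
        with hq
      rw [hΨ, transposeDepolarizing_diagonal d t _ (by rw [Finset.sum_pi_single']; simp),
        diagonal_kronecker_diagonal]
      have h1 : (fun mn : Fin d × Fin d => ((q mn.1 : ℝ) : ℂ) * ((q mn.2 : ℝ) : ℂ)) =
          fun mn => ((q mn.1 * q mn.2 : ℝ) : ℂ) := by
        ext mn; push_cast; rfl
      have h2 : ∑ i, q i = 1 := by
        have := sum_single_output ⟨0, hd⟩ id t ((1 - t) / d)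
        simp only [id] at this
        rw [this]
        have : (d : ℝ) ≠ 0 := by exact_mod_cast hd.ne'
        field_simp
        ring
      have h3 : ∑ i, Real.negMulLog (q i) = _ := sum_single_output ⟨0, hd⟩ _ t _
      change _ = vnEntropy (diagonal fun mn : Fin d × Fin d =>
        ((q mn.1 : ℝ) : ℂ) * ((q mn.2 : ℝ) : ℂ))
      rw [h1, vnEntropy_diagonal, Fintype.sum_prod_type]
      simp only [Real.negMulLog_mul, Finset.sum_add_distrib, ← Finset.sum_mul, ← Finset.mul_sum,
        h2, h3]
      ring
  · rintro x ⟨ρ, hρ, rfl⟩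
    obtain ⟨V, p, hp, hp1, hV, hV', rfl⟩ := density_eq_sum_pure hρ
    rw [unitary_diag_eq_sum, map_sum]
    simp only [map_smul]
    have hpure := fun k => two_copy_pure d t hd ht hab Ψ hΨ (fun i => V i k) (by
      rw [trace_vecMulVec, dotProduct]
      have := congrFun (congrFun hV k) k
      rw [mul_apply, one_apply_eq] at this
      rw [← this]
      exact Finset.sum_congr rfl fun i _ => mul_comm _ _)
    refine le_trans ?_ (vnEntropy_concave p _ hp hp1 fun k => (hpure k).1)
    refine le_trans (le_of_eq ?_)
      (Finset.sum_le_sum fun k _ => mul_le_mul_of_nonneg_left (hpure k).2 (hp k))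
    rw [← Finset.sum_mul, hp1, one_mul]

/-! ### Additivity -/

/-- Additivity of the minimal output entropy for the transpose depolarizing channel
in the range `-1/(d-1) ≤ t ≤ 0`. -/
theorem additivity_transposeDepolarizing
    (d : ℕ) (hd : 2 ≤ d) (t : ℝ)
    (ht₁ : -(1 / ((d : ℝ) - 1)) ≤ t) (ht₂ : t ≤ 0)
    (Ψ : Matrix (Fin d × Fin d) (Fin d × Fin d) ℂ →ₗ[ℂ]
         Matrix (Fin d × Fin d) (Fin d × Fin d) ℂ)
    (hΨ : ∀ A B : Matrix (Fin d) (Fin d) ℂ,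
      Ψ (A ⊗ₖ B) = (transposeDepolarizing d t A) ⊗ₖ (transposeDepolarizing d t B)) :
    minOutputEntropy (fun ρ => Ψ ρ) = 2 * minOutputEntropy (transposeDepolarizing d t) := by
  have hd0 : 0 < d := by omega
  have hd' : (2 : ℝ) ≤ d := by exact_mod_cast hd
  -- the lower bound on `t` says exactly that the outputs of the channel are positive
  have hab : -t ≤ (1 - t) / d := by
    rw [le_div_iff₀ (by linarith)]
    have h1 : -t ≤ 1 / ((d : ℝ) - 1) := by linarith
    rw [le_div_iff₀ (by linarith)] at h1
    linarith
  rw [minOutputEntropy, minOutputEntropy, (one_copy_isLeast d t hd0 ht₂ hab).csInf_eq,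
    (two_copy_isLeast d t hd0 ht₂ hab Ψ hΨ).csInf_eq]
end

section
/- Fix d ≥ 2 and a real t. Let λ ∈ Σ_d, let e_1,…,e_d be the standard basis of ℂ^d, and let ψ = ∑_{α=1}^d √λ_α · (e_α ⊗ e_α) ∈ ℂ^d ⊗ ℂ^d. Then (Φ ⊗ Φ)(|ψ⟩⟨ψ|) = ∑_{α,β=1}^d [ (1−t)²/d² + t(1−t)(λ_α + λ_β)/d ] · |e_α ⊗ e_β⟩⟨e_α ⊗ e_β| + t² · ∑_{α,β=1}^d √(λ_α λ_β) · |e_α ⊗ e_α⟩⟨e_β ⊗ e_β|, where Φ ⊗ Φ is the linear map on d²×d² matrices determined by (Φ ⊗ Φ)(A ⊗ B) = Φ(A) ⊗ Φ(B) on Kronecker products. -/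
/-!
Write `E_{αβ}` for the matrix units. Since `(e_α ⊗ e_α)(e_β ⊗ e_β)* = E_{αβ} ⊗ E_{αβ}`, the state
`|ψ⟩⟨ψ|` is `∑ √λ_α √λ_β E_{αβ} ⊗ E_{αβ}`, and linearity reduces the claim to
`Φ(E_{αβ}) = t E_{βα} + δ_{αβ} (1-t)/d · I`. In the product `Φ(E_{αβ}) ⊗ Φ(E_{αβ})` the two
transposed parts give the correlated term (after exchanging `α` and `β`), while every other part is
supported on `α = β` and is diagonal; `√λ_α √λ_α = λ_α` and `∑ λ_α = 1` give its coefficients.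
-/

open Matrix Kronecker

/-- The standard basis vector `e_a` of `ℂ^d`. -/
def stdVec (d : ℕ) (a : Fin d) : Fin d → ℂ := fun i => if i = a then 1 else 0

/-- The tensor product vector `e_a ⊗ e_b` in `ℂ^d ⊗ ℂ^d`. -/
def ket2 (d : ℕ) (a b : Fin d) : Fin d × Fin d → ℂ :=
  fun p => stdVec d a p.1 * stdVec d b p.2

/-- The operator `|ψ⟩⟨ψ|` of a maximally correlated vector, expanded in products of matrix units. -/
lemma vecMulVec_correlated (d : ℕ) (s : Fin d → ℝ) (ψ : Fin d × Fin d → ℂ)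
    (hψ : ψ = fun p => ∑ α, (s α : ℂ) * ket2 d α α p) :
    vecMulVec ψ (star ψ) = ∑ α, ∑ β, ((s α : ℂ) * (s β : ℂ)) •
      (Matrix.single α β (1 : ℂ) ⊗ₖ Matrix.single α β (1 : ℂ)) := by
  subst hψ
  ext ⟨i, j⟩ ⟨k, l⟩
  simp only [vecMulVec_apply, Pi.star_apply, star_sum, Matrix.sum_apply, Matrix.smul_apply,
    kroneckerMap_apply, Finset.sum_mul_sum, ket2, stdVec, Matrix.single_apply, smul_eq_mul]
  refine Finset.sum_congr rfl fun α _ => Finset.sum_congr rfl fun β _ => ?_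
  by_cases h1 : i = α <;> by_cases h2 : j = α <;> by_cases h3 : k = β <;> by_cases h4 : l = β <;>
    simp [h1, h2, h3, h4, eq_comm]

lemma vecMulVec_ket2_apply (d : ℕ) (a b a' b' i j k l : Fin d) :
    vecMulVec (ket2 d a b) (star (ket2 d a' b')) (i, j) (k, l) =
      if i = a ∧ j = b ∧ k = a' ∧ l = b' then 1 else 0 := by
  simp only [vecMulVec_apply, Pi.star_apply, ket2, stdVec]
  by_cases h1 : i = a <;> by_cases h2 : j = b <;> by_cases h3 : k = a' <;>
    by_cases h4 : l = b' <;> simp [h1, h2, h3, h4]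

/-- `Φ(E_{αβ}) = t E_{βα} + δ_{αβ} (1-t)/d · I`, entrywise. -/
lemma transposeDepolarizing_single_apply (d : ℕ) (t : ℝ) (α β i k : Fin d) :
    transposeDepolarizing d t (Matrix.single α β 1) i k =
      (t : ℂ) * (if i = β ∧ k = α then 1 else 0) +
        (1 - t : ℂ) / d * (if α = β ∧ i = k then 1 else 0) := by
  by_cases h : α = β
  · subst h
    simp [transposeDepolarizing, Matrix.single_apply, Matrix.one_apply, eq_comm]
  · simp [transposeDepolarizing, Matrix.single_apply, Matrix.trace_single_eq_of_ne _ _ _ h, h,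
      eq_comm, and_comm]

/-- The `((i, j), (k, l))` entry of `s_α s_β Φ(E_{αβ}) ⊗ Φ(E_{αβ})`, with `c = (1-t)/d`, split into
its correlated part and its diagonal part. -/
lemma correlated_entry_split {ι : Type*} [DecidableEq ι] (t c : ℂ) (s : ι → ℂ)
    (α β i j k l : ι) :
    (s α * s β) *
      ((t * (if i = β ∧ k = α then 1 else 0) + c * (if α = β ∧ i = k then 1 else 0)) *
       (t * (if j = β ∧ l = α then 1 else 0) + c * (if α = β ∧ j = l then 1 else 0))) =
    (if k = α then (if i = β then (if i = j ∧ k = l then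
      t ^ 2 * (s α * s β) else 0) else 0) else 0) +
    (if α = β then (if i = k ∧ j = l then (s α * s α) * (t * c * (if i = α then 1 else 0) +
      t * c * (if j = α then 1 else 0) + c ^ 2) else 0) else 0) := by
  have hcorr : (if i = β ∧ k = α then (1 : ℂ) else 0) * (if j = β ∧ l = α then 1 else 0) =
      if k = α then (if i = β then (if i = j ∧ k = l then 1 else 0) else 0) else 0 := by
    grind
  have hpull : (if k = α then (if i = β then (if i = j ∧ k = l then
      t ^ 2 * (s α * s β) else 0) else 0) else 0) = t ^ 2 * (s α * s β) *
      (if k = α then (if i = β then (if i = j ∧ k = l then 1 else 0) else 0) else 0) := by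
    simp only [mul_ite, mul_one, mul_zero]
  rw [hpull, ← hcorr]
  by_cases hab : α = β
  · subst hab
    by_cases hik : i = k
    · subst hik
      by_cases hjl : j = l
      · subst hjl
        simp only [and_self, if_true]
        ring
      · have : ¬(j = α ∧ l = α) := fun h => hjl (h.1.trans h.2.symm)
        simp [hjl, this]
    · have : ¬(i = α ∧ k = α) := fun h => hik (h.1.trans h.2.symm)
      simp [hik, this]
  · simp only [hab, false_and, if_false]
    ring

/-- Explicit form of `(Φ ⊗ Φ)(|ψ⟩⟨ψ|)` for `ψ = ∑_α √λ_α e_α ⊗ e_α`. -/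
theorem output_of_maximally_correlated
    (d : ℕ) (hd : 2 ≤ d) (t : ℝ)
    (lam : Fin d → ℝ) (hlam : lam ∈ stdSimplex ℝ (Fin d))
    (ψ : Fin d × Fin d → ℂ)
    (hψ : ψ = fun p => ∑ α, (Real.sqrt (lam α) : ℂ) * ket2 d α α p)
    (Ψ : Matrix (Fin d × Fin d) (Fin d × Fin d) ℂ →ₗ[ℂ]
         Matrix (Fin d × Fin d) (Fin d × Fin d) ℂ)
    (hΨ : ∀ A B : Matrix (Fin d) (Fin d) ℂ,
      Ψ (A ⊗ₖ B) = (transposeDepolarizing d t A) ⊗ₖ (transposeDepolarizing d t B)) :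
    Ψ (vecMulVec ψ (star ψ)) =
      (∑ α, ∑ β, ((((1 - t) ^ 2 / (d : ℝ) ^ 2
            + t * (1 - t) * (lam α + lam β) / d : ℝ)) : ℂ) •
          vecMulVec (ket2 d α β) (star (ket2 d α β)))
        + ((t ^ 2 : ℝ) : ℂ) • ∑ α, ∑ β, ((Real.sqrt (lam α * lam β) : ℝ) : ℂ) •
            vecMulVec (ket2 d α α) (star (ket2 d β β)) := by
  rw [vecMulVec_correlated d (fun α => Real.sqrt (lam α)) ψ hψ]
  simp only [map_sum, map_smul, hΨ]
  have hsq : ∀ α, ((Real.sqrt (lam α) : ℝ) : ℂ) * ((Real.sqrt (lam α) : ℝ) : ℂ) = (lam α : ℂ) :=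
    fun α => by rw [← Complex.ofReal_mul, Real.mul_self_sqrt (hlam.1 α)]
  have hmul : ∀ α β, ((Real.sqrt (lam α * lam β) : ℝ) : ℂ) =
      (Real.sqrt (lam α) : ℂ) * (Real.sqrt (lam β) : ℂ) :=
    fun α β => by rw [← Complex.ofReal_mul, Real.sqrt_mul (hlam.1 α)]
  have hsum : ∑ α, (lam α : ℂ) = 1 := by rw [← Complex.ofReal_sum, hlam.2, Complex.ofReal_one]
  ext ⟨i, j⟩ ⟨k, l⟩
  simp only [Matrix.add_apply, Matrix.smul_apply, Matrix.sum_apply, kroneckerMap_apply,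
    transposeDepolarizing_single_apply, smul_eq_mul, hmul]
  set c : ℂ := (1 - t : ℂ) / d with hc
  have hL := fun α β : Fin d =>
    correlated_entry_split (t : ℂ) c (fun α => (Real.sqrt (lam α) : ℂ)) α β i j k l
  have hR1 : ∀ (z : ℂ) (α β : Fin d),
      z * vecMulVec (ket2 d α β) (star (ket2 d α β)) (i, j) (k, l) =
      if i = α then (if j = β then (if i = k ∧ j = l then z else 0) else 0) else 0 := by
    intro z α β
    rw [vecMulVec_ket2_apply]
    grind
  have hR2 : ∀ (z : ℂ) (α β : Fin d),
      z * vecMulVec (ket2 d α α) (star (ket2 d β β)) (i, j) (k, l) =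
      if i = α then (if k = β then (if i = j ∧ k = l then z else 0) else 0) else 0 := by
    intro z α β
    rw [vecMulVec_ket2_apply]
    grind
  simp only [hL, hsq, hR1, hR2, Finset.sum_add_distrib, Finset.sum_ite_irrel,
    Finset.sum_const_zero, Finset.sum_ite_eq, Finset.mem_univ, if_true]
  have hdiag : ∑ α, (lam α : ℂ) * (t * c * (if i = α then 1 else 0) +
      t * c * (if j = α then 1 else 0) + c ^ 2) = t * c * (lam i + lam j) + c ^ 2 := by
    simp only [mul_add, Finset.sum_add_distrib, ← Finset.sum_mul, hsum]
    simp
    ring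
  have hcoef : (t : ℂ) * c * (lam i + lam j) + c ^ 2 =
      (((1 - t) ^ 2 / (d : ℝ) ^ 2 + t * (1 - t) * (lam i + lam j) / d : ℝ) : ℂ) := by
    rw [hc]
    push_cast
    ring
  rw [← hcoef, ← hdiag]
  by_cases h1 : i = k ∧ j = l <;> by_cases h2 : i = j ∧ k = l <;> simp only [h1, h2, if_true, if_false] <;>
    push_cast <;> simp <;> ring
end

section
/- Let d ≥ 2, let a be a real number, 0 ≤ k ≤ d−1, and define Φ_k(ν) = s_{d−k}(ν_1,…,ν_d) + a·∑_{l=1}^d (ν_l − 1)·s_{d−1−k}(ν_1,…,ν̂_l,…,ν_d). Then for all indices i ≠ j, ∂Φ_k/∂ν_i − ∂Φ_k/∂ν_j = (ν_j − ν_i) · [ (1 + 2a)·s_{d−k−2}(ν with ν_i, ν_j omitted) + a·∑_{l ≠ i,j} (ν_l − 1)·s_{d−k−3}(ν with ν_i, ν_j, ν_l omitted) ], with the conventions s_0 = 1 and s_q = 0 for q < 0. -/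
/-!
As a function of `x = ν i` and `y = ν j` alone, `Φ_k` is symmetric and affine in each of the two
variables, so `Φ_k = A + B (x + y) + C x y` with `A`, `B`, `C` depending only on the other
variables. Hence `∂Φ_k/∂x - ∂Φ_k/∂y = C (y - x)`, and `C` is the bracket in the theorem. The
expansion (`PhiK_expand`) follows by repeated use of the recursion
`s_q(x, μ) = s_q(μ) + x s_{q-1}(μ)` (`esymm_insert`), valid for every integer `q`.
-/

/-- The elementary symmetric polynomial `s_q` of the variables `ν i`, `i ∈ s`,
with the conventions `s_0 = 1` and `s_q = 0` for `q < 0` (or `q > card s`). -/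
noncomputable def esymm {ι : Type*} [DecidableEq ι] (s : Finset ι) (ν : ι → ℝ) (q : ℤ) : ℝ :=
  if q < 0 then 0 else ∑ A ∈ s.powersetCard q.toNat, ∏ i ∈ A, ν i

/-- The function `Φ_k(ν) = s_{d-k}(ν) + a ∑_l (ν_l - 1) s_{d-1-k}(ν with ν_l omitted)`. -/
noncomputable def PhiK (d : ℕ) (a : ℝ) (k : ℕ) (ν : Fin d → ℝ) : ℝ :=
  esymm Finset.univ ν ((d : ℤ) - k) +
    a * ∑ l, (ν l - 1) * esymm (Finset.univ.erase l) ν ((d : ℤ) - 1 - k)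

theorem esymm_congr {ι : Type*} [DecidableEq ι] {s : Finset ι} {μ ν : ι → ℝ}
    (h : ∀ l ∈ s, μ l = ν l) (q : ℤ) : esymm s μ q = esymm s ν q := by
  unfold esymm
  split_ifs
  · rfl
  · refine Finset.sum_congr rfl fun A hA => Finset.prod_congr rfl fun l hl => ?_
    exact h l ((Finset.mem_powersetCard.1 hA).1 hl)

theorem esymm_insert {ι : Type*} [DecidableEq ι] {s : Finset ι} {i : ι} (hi : i ∉ s)
    (ν : ι → ℝ) (q : ℤ) :
    esymm (insert i s) ν q = esymm s ν q + ν i * esymm s ν (q - 1) := by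
  unfold esymm
  rcases lt_trichotomy q 0 with hq | rfl | hq
  · simp [hq, show q < 1 by omega]
  · simp
  · obtain ⟨n, rfl⟩ : ∃ n : ℕ, q = n + 1 := ⟨(q - 1).toNat, by omega⟩
    have h1 : ¬ ((n : ℤ) + 1 < 0) := by omega
    have h2 : ¬ ((n : ℤ) + 1 - 1 < 0) := by omega
    have h3 : ((n : ℤ) + 1).toNat = n + 1 := by omega
    have h4 : ((n : ℤ) + 1 - 1).toNat = n := by omega
    rw [if_neg h1, if_neg h1, if_neg h2, h3, h4, Finset.powersetCard_succ_insert hi,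
      Finset.sum_union, Finset.sum_image, Finset.mul_sum]
    · congr 1
      refine Finset.sum_congr rfl fun A hA => ?_
      exact Finset.prod_insert fun h => hi ((Finset.mem_powersetCard.1 hA).1 h)
    · intro A hA B hB hAB
      have hA' : i ∉ A := fun h => hi ((Finset.mem_powersetCard.1 hA).1 h)
      have hB' : i ∉ B := fun h => hi ((Finset.mem_powersetCard.1 hB).1 h)
      rw [← Finset.erase_insert hA', ← Finset.erase_insert hB']
      exact congrArg (fun S => Finset.erase S i) hAB
    · refine Finset.disjoint_left.2 fun A hA hB => ?_
      obtain ⟨B, -, rfl⟩ := Finset.mem_image.1 hB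
      exact hi ((Finset.mem_powersetCard.1 hA).1 (Finset.mem_insert_self i B))

theorem esymm_insert_insert {ι : Type*} [DecidableEq ι] {s : Finset ι} {i j : ι} (hij : i ≠ j)
    (hi : i ∉ s) (hj : j ∉ s) (ν : ι → ℝ) (q : ℤ) :
    esymm (insert i (insert j s)) ν q =
      esymm s ν q + (ν i + ν j) * esymm s ν (q - 1) + ν i * ν j * esymm s ν (q - 2) := by
  rw [esymm_insert (by simp [hij, hi]), esymm_insert hj, esymm_insert hj,
    show q - 1 - 1 = q - 2 by ring]
  ring

/-- With all variables other than `ν i`, `ν j` frozen, `Φ_k` is a symmetric polynomial of degree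
at most one in each of these two; only its mixed coefficient matters below. -/
theorem PhiK_expand (d : ℕ) (a : ℝ) (k : ℕ) (ν : Fin d → ℝ) (i j : Fin d) (hij : i ≠ j) :
    ∃ A B : ℝ, ∀ μ : Fin d → ℝ, (∀ l, l ≠ i → l ≠ j → μ l = ν l) →
      PhiK d a k μ = A + B * (μ i + μ j) + μ i * μ j *
        ((1 + 2 * a) * esymm ((Finset.univ.erase i).erase j) ν ((d : ℤ) - k - 2) +
          a * ∑ l ∈ (Finset.univ.erase i).erase j, (ν l - 1) *
            esymm (((Finset.univ.erase i).erase j).erase l) ν ((d : ℤ) - k - 3)) := by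
  set T : Finset (Fin d) := (Finset.univ.erase i).erase j with hT
  have hiT : i ∉ T := by simp [hT]
  have hjT : j ∉ T := by simp [hT]
  have hU : (Finset.univ : Finset (Fin d)) = insert i (insert j T) := by
    ext l; simp [hT]; tauto
  have hUi : (Finset.univ : Finset (Fin d)).erase i = insert j T := by
    ext l; simp [hT]; grind
  have hUj : (Finset.univ : Finset (Fin d)).erase j = insert i T := by
    ext l; simp [hT]; grind
  have hUl : ∀ l ∈ T, (Finset.univ : Finset (Fin d)).erase l =
      insert i (insert j (T.erase l)) := by
    intro l hl
    ext m; simp [hT] at hl ⊢; grind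
  set n : ℤ := (d : ℤ) - k with hn
  refine ⟨esymm T ν n - 2 * a * esymm T ν (n - 1) +
      a * ∑ l ∈ T, (ν l - 1) * esymm (T.erase l) ν (n - 1),
    (1 + a) * esymm T ν (n - 1) - a * esymm T ν (n - 2) +
      a * ∑ l ∈ T, (ν l - 1) * esymm (T.erase l) ν (n - 2), fun μ hμ => ?_⟩
  have hμT : ∀ l ∈ T, μ l = ν l := fun l hl =>
    hμ l (fun h => hiT (h ▸ hl)) (fun h => hjT (h ▸ hl))
  have hE : ∀ q, esymm T μ q = esymm T ν q := esymm_congr hμT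
  have hsum : ∑ l ∈ T, (μ l - 1) * esymm (Finset.univ.erase l) μ (n - 1) =
      ∑ l ∈ T, (ν l - 1) * esymm (T.erase l) ν (n - 1) +
      (μ i + μ j) * ∑ l ∈ T, (ν l - 1) * esymm (T.erase l) ν (n - 2) +
      μ i * μ j * ∑ l ∈ T, (ν l - 1) * esymm (T.erase l) ν (n - 3) := by
    rw [Finset.mul_sum, Finset.mul_sum, ← Finset.sum_add_distrib, ← Finset.sum_add_distrib]
    refine Finset.sum_congr rfl fun l hl => ?_
    have hF : ∀ q, esymm (T.erase l) μ q = esymm (T.erase l) ν q :=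
      esymm_congr fun m hm => hμT m (Finset.mem_of_mem_erase hm)
    rw [hUl l hl, esymm_insert_insert hij (fun h => hiT (Finset.mem_of_mem_erase h))
      (fun h => hjT (Finset.mem_of_mem_erase h)), hF, hF, hF, hμT l hl,
      show n - 1 - 1 = n - 2 by ring, show n - 1 - 2 = n - 3 by ring]
    ring
  have hsplit : ∀ f : Fin d → ℝ, ∑ l, f l = f i + (f j + ∑ l ∈ T, f l) := by
    intro f
    rw [hU, Finset.sum_insert (by simp [hij, hiT]), Finset.sum_insert hjT]
  unfold PhiK
  rw [show (d : ℤ) - 1 - k = n - 1 by rw [hn]; ring, ← hn, hsplit, hsum, hUi, hUj, hU,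
    esymm_insert_insert hij hiT hjT, esymm_insert hiT, esymm_insert hjT]
  simp only [hE, show n - 1 - 1 = n - 2 by ring]
  ring

/-- Difference of partial derivatives of `Φ_k`:
`∂Φ_k/∂ν_i - ∂Φ_k/∂ν_j = (ν_j - ν_i)[(1+2a) s_{d-k-2}(ν̂ᵢ,ν̂ⱼ)
  + a ∑_{l ≠ i,j} (ν_l - 1) s_{d-k-3}(ν̂ᵢ,ν̂ⱼ,ν̂ₗ)]`. -/
theorem PhiK_partialDeriv_difference
    (d : ℕ) (hd : 2 ≤ d) (a : ℝ) (k : ℕ) (hk : k ≤ d - 1)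
    (ν : Fin d → ℝ) (i j : Fin d) (hij : i ≠ j) :
    deriv (fun s => PhiK d a k (Function.update ν i s)) (ν i) -
        deriv (fun s => PhiK d a k (Function.update ν j s)) (ν j) =
      (ν j - ν i) *
        ((1 + 2 * a) * esymm ((Finset.univ.erase i).erase j) ν ((d : ℤ) - k - 2) +
          a * ∑ l ∈ (Finset.univ.erase i).erase j, (ν l - 1) *
            esymm (((Finset.univ.erase i).erase j).erase l) ν ((d : ℤ) - k - 3)) := by
  obtain ⟨A, B, h⟩ := PhiK_expand d a k ν i j hij
  set C := (1 + 2 * a) * esymm ((Finset.univ.erase i).erase j) ν ((d : ℤ) - k - 2) +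
          a * ∑ l ∈ (Finset.univ.erase i).erase j, (ν l - 1) *
            esymm (((Finset.univ.erase i).erase j).erase l) ν ((d : ℤ) - k - 3)
  have hi : (fun s => PhiK d a k (Function.update ν i s)) =
      fun s => (B + ν j * C) * s + (A + B * ν j) := by
    funext s
    rw [h _ fun l hl _ => Function.update_of_ne hl _ _, Function.update_self,
      Function.update_of_ne hij.symm]
    ring
  have hj : (fun s => PhiK d a k (Function.update ν j s)) =
      fun s => (B + ν i * C) * s + (A + B * ν i) := by
    funext s
    rw [h _ fun l _ hl => Function.update_of_ne hl _ _, Function.update_self,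
      Function.update_of_ne hij]
    ring
  have hderiv : ∀ p q x : ℝ, deriv (fun s : ℝ => p * s + q) x = p := fun p q x => by
    simp
  rw [hi, hj, hderiv, hderiv]
  ring
end

section
/- Let n ≥ 1 and let ν_1,…,ν_n be real numbers with ν_l ≤ 1 for all l and ∑_{l=1}^n ν_l ≥ n − 2. Then for every k with 0 ≤ k ≤ n−1, ∑_{l=1}^n (1 − ν_l)·s_{n−k−1}(ν_1,…,ν̂_l,…,ν_n) ≥ 0. -/
/-- The elementary symmetric polynomial of degree `q` in the variables `ν i`, `i ∈ s`, with a
natural number as degree. -/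
noncomputable def esymmSum {ι : Type*} (s : Finset ι) (ν : ι → ℝ) (q : ℕ) : ℝ :=
  ∑ A ∈ s.powersetCard q, ∏ i ∈ A, ν i

theorem esymm_natCast {ι : Type*} [DecidableEq ι] (s : Finset ι) (ν : ι → ℝ) (q : ℕ) :
    esymm s ν (q : ℤ) = esymmSum s ν q := by
  simp [esymm, esymmSum]

/-- Subsets of `insert a s` of size `p + 1` either avoid `a` or arise from a subset of `s` of size `p`. -/
theorem esymmSum_insert {ι : Type*} [DecidableEq ι] {s : Finset ι} {a : ι} (ha : a ∉ s)
    (ν : ι → ℝ) (p : ℕ) :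
    esymmSum (insert a s) ν (p + 1) = esymmSum s ν (p + 1) + ν a * esymmSum s ν p := by
  have hmem : ∀ A ∈ s.powersetCard p, a ∉ A := fun A hA h =>
    ha ((Finset.mem_powersetCard.1 hA).1 h)
  unfold esymmSum
  rw [Finset.powersetCard_succ_insert ha, Finset.sum_union, Finset.sum_image, Finset.mul_sum]
  · congr 1
    exact Finset.sum_congr rfl fun A hA => Finset.prod_insert (hmem A hA)
  · intro A hA B hB h
    rw [← Finset.erase_insert (hmem A hA), ← Finset.erase_insert (hmem B hB)]
    exact congrArg (fun C => C.erase a) h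
  · rw [Finset.disjoint_left]
    intro A hA hA'
    obtain ⟨B, -, rfl⟩ := Finset.mem_image.1 hA'
    exact ha ((Finset.mem_powersetCard.1 hA).1 (Finset.mem_insert_self a B))

theorem esymmSum_nonneg {ι : Type*} {s : Finset ι} {ν : ι → ℝ} (h : ∀ i ∈ s, 0 ≤ ν i) (q : ℕ) :
    0 ≤ esymmSum s ν q :=
  Finset.sum_nonneg fun _ hA => Finset.prod_nonneg fun i hi =>
    h i ((Finset.mem_powersetCard.1 hA).1 hi)

/-- If `ν_l ≤ 1` for all `l` and `∑ ν_l ≥ n - 2`, then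
`∑_l (1 - ν_l) s_{n-k-1}(ν with ν_l omitted) ≥ 0` for `0 ≤ k ≤ n-1`. -/
theorem first_term_nonneg
    (n : ℕ) (hn : 1 ≤ n) (ν : Fin n → ℝ) (hν : ∀ l, ν l ≤ 1)
    (hsum : (n : ℝ) - 2 ≤ ∑ l, ν l)
    (k : ℕ) (hk : k ≤ n - 1) :
    0 ≤ ∑ l, (1 - ν l) * esymm (Finset.univ.erase l) ν ((n : ℤ) - k - 1) := by
  obtain ⟨q, hq⟩ : ∃ q : ℕ, (n : ℤ) - k - 1 = q := ⟨n - 1 - k, by omega⟩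
  simp only [hq, esymm_natCast]
  have hx : ∑ l, (1 - ν l) ≤ 2 := by
    rw [Finset.sum_sub_distrib]
    simp only [Finset.sum_const, Finset.card_univ, Fintype.card_fin, nsmul_eq_mul, mul_one]
    linarith
  by_cases hpos : ∀ l, 0 ≤ ν l
  · exact Finset.sum_nonneg fun l _ =>
      mul_nonneg (by linarith [hν l]) (esymmSum_nonneg (fun i _ => hpos i) q)
  push Not at hpos
  obtain ⟨m, hm⟩ := hpos
  rw [← Finset.add_sum_erase _ _ (Finset.mem_univ m)] at hx ⊢
  set T := Finset.univ.erase m with hT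
  have hle : ∀ l ∈ T, 0 ≤ ν m + ν l := fun l hl => by
    have := Finset.single_le_sum (f := fun l => 1 - ν l) (fun i _ => by linarith [hν i]) hl
    linarith
  have hTpos : ∀ l ∈ T, 0 ≤ ν l := fun l hl => by linarith [hle l hl]
  cases q with
  | zero =>
    simp only [esymmSum, Finset.powersetCard_zero, Finset.sum_singleton, Finset.prod_empty, mul_one]
    have : 0 ≤ ∑ l ∈ T, (1 - ν l) := Finset.sum_nonneg fun l _ => by linarith [hν l]
    linarith
  | succ p =>
    have hterm : ∀ l ∈ T, (1 - ν l) * -esymmSum T ν (p + 1) ≤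
        (1 - ν l) * esymmSum (Finset.univ.erase l) ν (p + 1) := fun l hl => by
      have hlm : l ≠ m := Finset.ne_of_mem_erase hl
      have hset : Finset.univ.erase l = insert m (T.erase l) := by
        ext i
        simp only [hT, Finset.mem_erase, Finset.mem_insert, Finset.mem_univ]
        grind
      -- This gives `s_{p+1}(T) = s_{p+1}(T \ l) + ν l * s_p(T \ l)`.
      have hrec := esymmSum_insert (Finset.notMem_erase l T) ν p
      rw [Finset.insert_erase hl] at hrec
      have hpos' : ∀ r, 0 ≤ esymmSum (T.erase l) ν r :=
        esymmSum_nonneg fun i hi => hTpos i (Finset.mem_of_mem_erase hi)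
      apply mul_le_mul_of_nonneg_left _ (by linarith [hν l])
      rw [hset, esymmSum_insert (by simp [hT]), hrec]
      nlinarith [mul_nonneg (hle l hl) (hpos' p), hpos' (p + 1)]
    have hsumT := Finset.sum_le_sum hterm
    rw [← Finset.sum_mul] at hsumT
    have hE := esymmSum_nonneg hTpos (p + 1)
    have hdiff : 0 ≤ (1 - ν m) - ∑ l ∈ T, (1 - ν l) := by linarith
    nlinarith [mul_nonneg hdiff hE]
end

section
/- Let d ≥ 3 and set n = d − 2. Let t satisfy -1/(d-1) ≤ t < 0, and let ν_1,…,ν_n be nonzero real numbers with ν_l ≤ 1 for all l, ∑_{l=1}^n ν_l ≥ n + 2td/(1−t), such that exactly one of the ν_l is negative and the rest are positive. Then ∑_{l=1}^n (1 − ν_l)/ν_l ≤ 2(1 + t(d−1))/(td). -/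
/-!
Put `x_l = 1 - ν_l ≥ 0` and `S = -2td/(1-t)`, so that `∑ x_l ≤ S ≤ 2`. Write `1 + y` for the
entry of `x` at the negative index and `r` for the sum of the other entries; then
`1 + y + r ≤ S`, which forces `r < 1`. Every other entry is at most `r`, so
`∑ x_l / (1 - x_l) ≤ r / (1 - r)` over these indices, and it remains to bound
`-(1 + y)/y + r/(1 - r)`. Since `1 - r ≥ 2 - S + y`, this is at most
`-2 - (2 - S)/(y (2 - S + y))`, and `y ≤ S - 1` makes that at most `-S/(S - 1)`.
With `u = -td` and `w = 1 - t` one has `S = 2u/w`, and the claim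
`-2u/(2u - w) ≤ -2(w - u)/u` becomes `3u² - 3uw + w² ≥ 0`, a definite quadratic form.
-/

/-- The two-variable inequality left after the entries other than the negative one are merged
into `r`; here `u = -td` and `w = 1 - t`. -/
lemma merged_bound (u w y r : ℝ) (hu : 0 < u) (hw : 0 < w) (huw : u ≤ w) (hy : 0 < y)
    (hr : 0 ≤ r) (h : 1 + y + r ≤ 2 * u / w) :
    -((1 + y) / y) + r / (1 - r) ≤ -(2 * (w - u) / u) := by
  obtain ⟨S, hS⟩ : ∃ S, S = 2 * u / w := ⟨_, rfl⟩
  rw [← hS] at h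
  have hS2 : S ≤ 2 := by
    rw [hS, div_le_iff₀ hw]
    linarith
  have hS1 : 0 < S - 1 := by linarith
  have hSw : S * w = 2 * u := by
    rw [hS]
    field_simp
  have hc : 0 < 2 - S + y := by linarith
  have h1 : r / (1 - r) ≤ 1 / (2 - S + y) - 1 := by
    have h2 : r / (1 - r) = 1 / (1 - r) - 1 := by
      have : 1 - r ≠ 0 := by linarith
      field_simp
      ring
    have h3 : 1 / (1 - r) ≤ 1 / (2 - S + y) := one_div_le_one_div_of_le hc (by linarith)
    linarith
  have h2 : -((1 + y) / y) + (1 / (2 - S + y) - 1) = -2 - (2 - S) / (y * (2 - S + y)) := by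
    field_simp
    ring
  have h3 : (2 - S) / (S - 1) ≤ (2 - S) / (y * (2 - S + y)) := by
    apply div_le_div_of_nonneg_left (by linarith) (by positivity)
    nlinarith
  have h4 : -2 - (2 - S) / (S - 1) = -(S / (S - 1)) := by
    field_simp
    ring
  have h5 : 2 * (w - u) / u ≤ S / (S - 1) := by
    rw [div_le_div_iff₀ hu hS1]
    -- After multiplication by `w` this is `2 (w - u) (2u - w) ≤ 2u²`.
    have h6 : (2 * (w - u) * (S - 1)) * w ≤ (S * u) * w := by
      have e1 : (2 * (w - u) * (S - 1)) * w = 2 * (w - u) * (S * w - w) := by ring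
      have e2 : (S * u) * w = S * w * u := by ring
      rw [e1, e2, hSw]
      nlinarith [sq_nonneg (2 * u - w), sq_nonneg (3 * u - 2 * w), sq_nonneg u]
    exact le_of_mul_le_mul_right h6 hw
  linarith


/-- The case `k = 0`: if exactly one of the `ν_l` is negative and the rest are
positive, `ν_l ≤ 1`, and `∑ ν_l ≥ n + 2td/(1-t)`, then
`∑_l (1 - ν_l)/ν_l ≤ 2(1 + t(d-1))/(td)`. -/
theorem case_k_zero
    (d n : ℕ) (hd : 3 ≤ d) (hn : n = d - 2) (t : ℝ)
    (ht₁ : -(1 / ((d : ℝ) - 1)) ≤ t) (ht₂ : t < 0)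
    (ν : Fin n → ℝ) (hν0 : ∀ l, ν l ≠ 0) (hν : ∀ l, ν l ≤ 1)
    (hsum : (n : ℝ) + 2 * t * d / (1 - t) ≤ ∑ l, ν l)
    (l₀ : Fin n) (hneg : ν l₀ < 0) (hpos : ∀ l, l ≠ l₀ → 0 < ν l) :
    ∑ l, (1 - ν l) / ν l ≤ 2 * (1 + t * ((d : ℝ) - 1)) / (t * d) := by
  have hD : (3 : ℝ) ≤ d := by exact_mod_cast hd
  have hw : 0 < 1 - t := by linarith
  have hu : 0 < -(t * d) := by nlinarith
  have huw : -(t * d) ≤ 1 - t := by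
    have h1 : (0 : ℝ) < d - 1 := by linarith
    rw [← neg_div, div_le_iff₀ h1] at ht₁
    linarith
  obtain ⟨r, hr⟩ : ∃ r, r = ∑ l ∈ Finset.univ.erase l₀, (1 - ν l) := ⟨_, rfl⟩
  have hr0 : 0 ≤ r := by
    rw [hr]
    exact Finset.sum_nonneg fun l _ => by linarith [hν l]
  have htot : (1 - ν l₀) + r = n - ∑ l, ν l := by
    rw [hr, Finset.add_sum_erase _ (fun l => 1 - ν l) (Finset.mem_univ l₀)]
    simp
  have hle : 1 + -ν l₀ + r ≤ 2 * -(t * d) / (1 - t) := by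
    have e : 2 * -(t * d) / (1 - t) = -(2 * t * d / (1 - t)) := by ring
    linarith
  have hr1 : r < 1 := by
    have : 2 * -(t * d) / (1 - t) ≤ 2 := by
      rw [div_le_iff₀ hw]
      linarith
    linarith
  have hrest : ∑ l ∈ Finset.univ.erase l₀, (1 - ν l) / ν l ≤ r / (1 - r) := by
    conv_rhs => rw [hr, Finset.sum_div, ← hr]
    refine Finset.sum_le_sum fun l hl => ?_
    have hlr : 1 - ν l ≤ r := by
      rw [hr]
      exact Finset.single_le_sum (f := fun l => 1 - ν l)
        (fun i _ => by linarith [hν i]) hl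
    exact div_le_div_of_nonneg_left (by linarith [hν l]) (by linarith) (by linarith)
  have key := merged_bound (-(t * d)) (1 - t) (-ν l₀) r hu hw huw (by linarith) hr0 hle
  rw [← Finset.add_sum_erase _ _ (Finset.mem_univ l₀)]
  have e1 : -((1 + -ν l₀) / -ν l₀) = (1 - ν l₀) / ν l₀ := by
    rw [div_neg, neg_neg, sub_eq_add_neg]
  have e2 : -(2 * (1 - t - -(t * d)) / -(t * d)) = 2 * (1 + t * ((d : ℝ) - 1)) / (t * d) := by
    rw [div_neg, neg_neg]
    congr 1
    ring
  rw [e1, e2] at key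
  linarith
end

section
/- Let d ≥ 2 and let t satisfy -1/(d-1) ≤ t < 0. Let ν₁ be a real number with 1 + 2td/(1−t) ≤ ν₁ < 0, and set ν₂ = 2(1 + t(d−1))/(1−t) − ν₁. Then ν₂ > 0 and 1/ν₁ + 1/ν₂ − 2 ≤ 2(1 + t(d−1))/(td). -/
/-!
Put `s = td/(1-t) < 0`. Then `ν₁ + ν₂ = 2(1+s) ≥ 0` and the right-hand side is `2 + 2/s`.
Since `ν₁ < 0`, we get `ν₂ > 0`, so `1/ν₁ + 1/ν₂ = (ν₁ + ν₂)/(ν₁ν₂) ≤ 0` and the left-hand side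
is at most `-2`. The bounds `1 + 2s ≤ ν₁ < 0` give `s ≤ -1/2`, which says exactly that
`-2 ≤ 2 + 2/s`.
-/


/-- The two-variable extreme-point inequality: for `-1/(d-1) ≤ t < 0`,
`1 + 2td/(1-t) ≤ ν₁ < 0` and `ν₂ = 2(1 + t(d-1))/(1-t) - ν₁`, one has `ν₂ > 0` and
`1/ν₁ + 1/ν₂ - 2 ≤ 2(1 + t(d-1))/(td)`. -/
theorem extreme_point_inequality
    (d : ℕ) (hd : 2 ≤ d) (t : ℝ)
    (ht₁ : -(1 / ((d : ℝ) - 1)) ≤ t) (ht₂ : t < 0)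
    (ν₁ ν₂ : ℝ)
    (hν₁_lb : 1 + 2 * t * d / (1 - t) ≤ ν₁) (hν₁_neg : ν₁ < 0)
    (hν₂ : ν₂ = 2 * (1 + t * ((d : ℝ) - 1)) / (1 - t) - ν₁) :
    0 < ν₂ ∧ 1 / ν₁ + 1 / ν₂ - 2 ≤ 2 * (1 + t * ((d : ℝ) - 1)) / (t * d) := by
  have hd' : (2 : ℝ) ≤ d := by exact_mod_cast hd
  have hd1 : (0 : ℝ) < d - 1 := by linarith
  have h1t : 0 < 1 - t := by linarith
  have htd : t * d < 0 := mul_neg_of_neg_of_pos ht₂ (by linarith)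
  have hA : 0 ≤ 1 + t * ((d : ℝ) - 1) := by
    have h := mul_le_mul_of_nonneg_right ht₁ hd1.le
    rw [neg_mul, one_div_mul_cancel hd1.ne'] at h
    linarith
  have hS : 0 ≤ ν₁ + ν₂ := by
    have h : 0 ≤ 2 * (1 + t * ((d : ℝ) - 1)) / (1 - t) := by positivity
    linarith
  have hν₂_pos : 0 < ν₂ := by linarith
  refine ⟨hν₂_pos, ?_⟩
  have hL : 1 / ν₁ + 1 / ν₂ ≤ 0 := by
    rw [div_add_div _ _ hν₁_neg.ne hν₂_pos.ne']
    exact div_nonpos_of_nonneg_of_nonpos (by linarith)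
      (mul_neg_of_neg_of_pos hν₁_neg hν₂_pos).le
  -- `1 + 2s < 0`, cleared of its denominator
  have hs : 2 * t * d < -1 * (1 - t) := by
    rw [← div_lt_iff₀ h1t]
    linarith
  have hR : -2 ≤ 2 * (1 + t * ((d : ℝ) - 1)) / (t * d) := by
    rw [le_div_iff_of_neg htd]
    linarith
  linarith
end
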